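/- arXiv:2206.14032 — 2 statements merged into one kernel-verified Lean document; each statement's English description precedes it below -/
import Mathlib

section
/- Let $A$ and $B$ be distinct odd primes and let $k$ be a positive integer. Then the equation $A^m - B^n = 2^k$ has at most one solution in positive integers $(m,n)$: if $A^{m_1} - B^{n_1} = 2^k$ and $A^{m_2} - B^{n_2} = 2^k$ with $m_1, n_1, m_2, n_2$ positive integers, then $(m_1,n_1) = (m_2,n_2)$. -/
theorem expandS {d : ℤ} (α : ℤ√d) (q : ℕ) : ∃ w u : ℤ,
    (α ^ (q+1)).re = α.re ^ (q+1) + d * α.im ^ 2 * w ∧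
    (α ^ (q+1)).im = α.im * ((q+1) * α.re ^ q + d * α.im ^ 2 * u) := by
  induction q with
  | zero => exact ⟨0, 0, by simp, by simp⟩
  | succ n ih =>
    obtain ⟨w, u, h1, h2⟩ := ih
    refine ⟨α.re * w + ((n+1) * α.re ^ n + d * α.im ^ 2 * u), α.re * u + w, ?_, ?_⟩
    · rw [pow_succ, Zsqrtd.re_mul, h1, h2]; ring
    · rw [pow_succ, Zsqrtd.im_mul, h1, h2]; push_cast; ring

theorem expandT {d : ℤ} (α : ℤ√d) (q : ℕ) : ∃ w u : ℤ,
    (α ^ (q+3)).re = α.re ^ (q+3) + ((q+3).choose 2 : ℕ) * α.re ^ (q+1) * (d * α.im ^ 2)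
      + (d * α.im ^ 2) ^ 2 * w ∧
    (α ^ (q+3)).im = α.im * ((q+3) * α.re ^ (q+2)
      + ((q+3).choose 3 : ℕ) * α.re ^ q * (d * α.im ^ 2) + (d * α.im ^ 2) ^ 2 * u) := by
  induction q with
  | zero =>
    refine ⟨0, 0, ?_, ?_⟩
    · rw [show 0 + 3 = 2 + 1 from rfl, pow_succ, pow_two, Zsqrtd.re_mul, Zsqrtd.re_mul, Zsqrtd.im_mul]
      norm_num [Nat.choose]; ring
    · rw [show 0 + 3 = 2 + 1 from rfl, pow_succ, pow_two, Zsqrtd.im_mul, Zsqrtd.re_mul, Zsqrtd.im_mul]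
      norm_num [Nat.choose]; ring
  | succ n ih =>
    obtain ⟨w, u, h1, h2⟩ := ih
    have c2 : ((n+1+3).choose 2 : ℕ) = (n+3).choose 2 + (n+3) := by
      rw [show n+1+3 = (n+3)+1 from rfl, Nat.choose_succ_succ' (n+3) 1]; simp; ring
    have c3 : ((n+1+3).choose 3 : ℕ) = (n+3).choose 3 + (n+3).choose 2 := by
      rw [show n+1+3 = (n+3)+1 from rfl, Nat.choose_succ_succ' (n+3) 2]; ring
    refine ⟨α.re * w + ((n+3).choose 3 : ℕ) * α.re ^ n + (d * α.im ^ 2) * u, α.re * u + w, ?_, ?_⟩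
    · rw [show n+1+3 = (n+3)+1 from rfl] at *
      rw [pow_succ, Zsqrtd.re_mul, h1, h2, c2]; push_cast; ring
    · rw [show n+1+3 = (n+3)+1 from rfl] at *
      rw [pow_succ, Zsqrtd.im_mul, h1, h2, c3]; push_cast; ring

theorem expandO {d : ℤ} (α : ℤ√d) (p : ℕ) : ∃ w u : ℤ,
    (α ^ (2*p+1)).re = α.re * ((2*p+1) * (d * α.im ^ 2) ^ p + α.re ^ 2 * w) ∧
    (α ^ (2*p+1)).im = α.im * ((d * α.im ^ 2) ^ p + α.re ^ 2 * u) := by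
  induction p with
  | zero => exact ⟨0, 0, by simp, by simp⟩
  | succ n ih =>
    obtain ⟨w, u, h1, h2⟩ := ih
    have e : α ^ (2*(n+1)+1) = α ^ (2*n+1) * (α * α) := by ring
    refine ⟨(2*n+1) * (d * α.im ^ 2) ^ n + α.re ^ 2 * w + d * α.im ^ 2 * w + 2 * d * α.im^2 * u,
      2 * ((2*n+1) * (d * α.im ^ 2) ^ n + α.re ^ 2 * w) + (d * α.im ^ 2) ^ n + α.re ^ 2 * u
       + d * α.im ^ 2 * u, ?_, ?_⟩
    · rw [e, Zsqrtd.re_mul, h1, h2, Zsqrtd.re_mul, Zsqrtd.im_mul]; push_cast; ring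
    · rw [e, Zsqrtd.im_mul, h1, h2, Zsqrtd.re_mul, Zsqrtd.im_mul]; ring

theorem im_dvd_im_pow {d : ℤ} (α : ℤ√d) (q : ℕ) : α.im ∣ (α ^ q).im := by
  cases q with
  | zero => simp
  | succ n => obtain ⟨w, u, -, h⟩ := expandS α n; rw [h]; exact dvd_mul_right _ _

theorem re_dvd_re_pow {d : ℤ} (α : ℤ√d) (q : ℕ) (hq : Odd q) : α.re ∣ (α ^ q).re := by
  obtain ⟨p, rfl⟩ := hq
  obtain ⟨w, u, h, -⟩ := expandO α p; rw [h]; exact dvd_mul_right _ _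

theorem norm_pow' {d : ℤ} (α : ℤ√d) (q : ℕ) : (α ^ q).norm = α.norm ^ q :=
  map_pow (Zsqrtd.normMonoidHom) α q

theorem norm_sq {d : ℤ} (α : ℤ√d) : α.norm = α.re ^ 2 - d * α.im ^ 2 := by
  rw [Zsqrtd.norm_def]; ring

theorem norm_inj {d : ℤ} {α β : ℤ√d} (h1 : |α.re| = |β.re|) (h2 : |α.im| = |β.im|) :
    α.norm = β.norm := by
  rw [norm_sq, norm_sq, ← sq_abs α.re, ← sq_abs α.im, h1, h2, sq_abs, sq_abs]

/-- generator lemma, raw form -/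
theorem gen_raw {d : ℤ} {A : ℕ} (hA : A.Prime) (hA2 : 2 < A) (hd : d < 0)
    (hAd : ¬ (A : ℤ) ∣ d) {α : ℤ√d} {h : ℕ} (hh : 0 < h) (hn : α.norm = (A : ℤ) ^ h)
    (hp : ¬ ((A : ℤ) : ℤ√d) ∣ α)
    (hmin : ∀ (h' : ℕ) (β : ℤ√d), 0 < h' → h' < h → β.norm = (A : ℤ) ^ h' →
      ((A : ℤ) : ℤ√d) ∣ β) :
    ∀ (m : ℕ) (γ : ℤ√d), γ.norm = (A : ℤ) ^ m → ¬ ((A : ℤ) : ℤ√d) ∣ γ →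
      ∃ (q : ℕ) (u : ℤ√d), m = h * q ∧ u.norm = 1 ∧ (γ = u * α ^ q ∨ γ = u * star α ^ q) := by
  have hAp : Prime (A : ℤ) := Nat.prime_iff_prime_int.mp hA
  have hA0 : (A : ℤ) ≠ 0 := hAp.ne_zero
  have hA2' : ¬ (A : ℤ) ∣ 2 := by
    intro hc
    have := Int.le_of_dvd (by norm_num) hc
    omega
  -- A does not divide re of a primitive element with norm a positive power
  have key : ∀ (m : ℕ) (γ : ℤ√d), 0 < m → γ.norm = (A : ℤ) ^ m → ¬ ((A : ℤ) : ℤ√d) ∣ γ →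
      ¬ (A : ℤ) ∣ γ.re ∧ ¬ (A : ℤ) ∣ γ.im := by
    intro m γ hm hγ hpr
    rw [norm_sq] at hγ
    have hdv : (A : ℤ) ∣ γ.re ^ 2 - d * γ.im ^ 2 := by rw [hγ]; exact dvd_pow_self _ hm.ne'
    constructor
    · intro hc
      apply hpr
      rw [Zsqrtd.intCast_dvd]
      refine ⟨hc, ?_⟩
      have h1 : (A : ℤ) ∣ d * γ.im ^ 2 := by
        have := dvd_sub (dvd_pow hc (two_ne_zero)) hdv
        simpa using this
      rcases hAp.dvd_or_dvd h1 with h2 | h2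
      · exact absurd h2 hAd
      · exact hAp.dvd_of_dvd_pow h2
    · intro hc
      apply hpr
      rw [Zsqrtd.intCast_dvd]
      refine ⟨?_, hc⟩
      have h1 : (A : ℤ) ∣ γ.re ^ 2 := by
        have := dvd_add hdv (dvd_mul_of_dvd_right (dvd_pow hc (two_ne_zero)) d)
        simpa using this
      exact hAp.dvd_of_dvd_pow h1
  -- division step
  have step : ∀ (m : ℕ) (γ : ℤ√d), h ≤ m → γ.norm = (A : ℤ) ^ m → ¬ ((A : ℤ) : ℤ√d) ∣ γ →
      ∃ δ : ℤ√d, (γ = δ * α ∨ γ = δ * star α) ∧ δ.norm = (A : ℤ) ^ (m - h) := by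
    intro m γ hm hγ hpr
    obtain ⟨kα1, kα2⟩ := key h α hh hn hp
    obtain ⟨kγ1, kγ2⟩ := key m γ (by omega) hγ hpr
    -- general: if A^h divides im of γ * β with norm β = A^h, then done
    have fin : ∀ β : ℤ√d, β.norm = (A : ℤ) ^ h → (A : ℤ) ^ h ∣ (γ * β).im →
        ∃ δ : ℤ√d, γ = δ * star β ∧ δ.norm = (A : ℤ) ^ (m - h) := by
      intro β hβ him
      have hre : (A : ℤ) ^ h ∣ (γ * β).re := by
        have hN : (γ * β).norm = (A : ℤ) ^ (m + h) := by rw [Zsqrtd.norm_mul, hγ, hβ, pow_add]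
        rw [norm_sq] at hN
        have h1 : ((A : ℤ) ^ h) ^ 2 ∣ (γ * β).re ^ 2 := by
          have : (γ * β).re ^ 2 = (A : ℤ) ^ (m + h) + d * (γ * β).im ^ 2 := by linarith
          rw [this]
          apply dvd_add
          · rw [← pow_mul]; exact pow_dvd_pow _ (by omega)
          · exact dvd_mul_of_dvd_right (pow_dvd_pow_of_dvd him 2) _
        exact (Int.pow_dvd_pow_iff two_ne_zero).mp h1
      have hdv : (((A : ℤ) ^ h : ℤ) : ℤ√d) ∣ γ * β := by
        rw [Zsqrtd.intCast_dvd]; exact ⟨hre, him⟩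
      obtain ⟨δ, hδ⟩ := hdv
      have h2 : γ = δ * star β := by
        apply Zsqrtd.eq_of_smul_eq_smul_left (a := (A : ℤ) ^ h) (pow_ne_zero _ hA0)
        have h3 : γ * β * star β = γ * ((A : ℤ) ^ h : ℤ) := by
          rw [mul_assoc, ← Zsqrtd.norm_eq_mul_conj, hβ]
        rw [hδ] at h3
        rw [mul_comm, ← h3]; ring
      refine ⟨δ, h2, ?_⟩
      have h4 : δ.norm * (A : ℤ) ^ h = (A : ℤ) ^ (m - h) * (A : ℤ) ^ h := by
        rw [← pow_add, Nat.sub_add_cancel hm, ← hγ, h2, Zsqrtd.norm_mul, Zsqrtd.norm_conj, hβ]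
      exact mul_right_cancel₀ (pow_ne_zero _ hA0) h4
    have hprod : (A : ℤ) ^ h ∣ (γ * α).im * (γ * star α).im := by
      have : (γ * α).im * (γ * star α).im
          = (A : ℤ) ^ h * (γ.im ^ 2) - (A : ℤ) ^ m * α.im ^ 2 := by
        rw [← hn, ← hγ, norm_sq, norm_sq]
        simp; ring
      rw [this]
      exact dvd_sub (dvd_mul_right _ _) (dvd_mul_of_dvd_left (pow_dvd_pow _ hm) _)
    have hor : ¬ (A : ℤ) ∣ (γ * α).im ∨ ¬ (A : ℤ) ∣ (γ * star α).im := by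
      by_contra hc
      push Not at hc
      obtain ⟨c1, c2⟩ := hc
      have := dvd_add c1 c2
      have e : (γ * α).im + (γ * star α).im = 2 * (γ.im * α.re) := by simp; ring
      rw [e] at this
      rcases hAp.dvd_or_dvd this with h2 | h2
      · exact hA2' h2
      · rcases hAp.dvd_or_dvd h2 with h2 | h2
        · exact kγ2 h2
        · exact kα1 h2
    rcases hor with h1 | h1
    · have hco : IsCoprime ((A : ℤ) ^ h) (γ * α).im :=
        ((Prime.coprime_iff_not_dvd hAp).mpr h1).pow_left
      obtain ⟨δ, e1, e2⟩ := fin (star α) (by rw [Zsqrtd.norm_conj, hn]) (hco.dvd_of_dvd_mul_left hprod)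
      exact ⟨δ, Or.inl (by rw [e1, star_star]), e2⟩
    · have hco : IsCoprime ((A : ℤ) ^ h) (γ * star α).im :=
        ((Prime.coprime_iff_not_dvd hAp).mpr h1).pow_left
      obtain ⟨δ, e1, e2⟩ := fin α hn (hco.dvd_of_dvd_mul_right hprod)
      exact ⟨δ, Or.inr e1, e2⟩
  intro m
  induction m using Nat.strong_induction_on with
  | _ m ih =>
  intro γ hγ hpr
  rcases Nat.eq_zero_or_pos m with rfl | hm
  · exact ⟨0, γ, by simp, by simpa using hγ, by simp⟩
  rcases lt_or_ge m h with hlt | hge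
  · exact absurd (hmin m γ hm hlt hγ) hpr
  obtain ⟨δ, hδ, hδn⟩ := step m γ hge hγ hpr
  have hδp : ¬ ((A : ℤ) : ℤ√d) ∣ δ := by
    intro hc
    apply hpr
    rcases hδ with e | e <;> rw [e] <;> exact dvd_mul_of_dvd_left hc _
  obtain ⟨q, u, hq, hu, hor⟩ := ih (m - h) (by omega) δ hδn hδp
  have hαα : ((A : ℤ) : ℤ√d) ∣ α * star α := by
    rw [← Zsqrtd.norm_eq_mul_conj, hn, Zsqrtd.intCast_dvd_intCast]
    exact dvd_pow_self _ hh.ne'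
  refine ⟨q + 1, u, by rw [mul_add, ← hq]; omega, hu, ?_⟩
  rcases hor with e | e <;> rcases hδ with f | f
  · left; rw [f, e]; ring
  · cases q with
    | zero => right; rw [f, e]; ring
    | succ q =>
      exfalso; apply hpr
      rw [f, e]
      obtain ⟨z, hz⟩ := hαα
      exact ⟨u * α ^ q * z, by linear_combination u * α ^ q * hz⟩
  · cases q with
    | zero => left; rw [f, e]; ring
    | succ q =>
      exfalso; apply hpr
      rw [f, e]
      obtain ⟨z, hz⟩ := hαα
      exact ⟨u * star α ^ q * z, by linear_combination u * star α ^ q * hz⟩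
  · right; rw [f, e]; ring

theorem unit_abs {d : ℤ} (hd : d < -1) {u : ℤ√d} (hu : u.norm = 1) : u = 1 ∨ u = -1 := by
  rw [norm_sq] at hu
  have him : u.im = 0 := by
    by_contra h
    have : 1 ≤ u.im ^ 2 := by have := sq_pos_of_ne_zero h; omega
    nlinarith [sq_nonneg u.re]
  rw [him] at hu
  have h3 : (u.re - 1) * (u.re + 1) = 0 := by linarith
  rcases mul_eq_zero.mp h3 with h | h
  · left; ext <;> simp <;> omega
  · right; ext <;> simp <;> omega

theorem star_pow_abs {d : ℤ} (α : ℤ√d) (q : ℕ) :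
    (star α ^ q).re = (α ^ q).re ∧ (star α ^ q).im = -(α ^ q).im := by
  rw [← star_pow]; exact ⟨Zsqrtd.re_star _, Zsqrtd.im_star _⟩

theorem gen {d : ℤ} {A : ℕ} (hA : A.Prime) (hA2 : 2 < A) (hd : d < -1)
    (hAd : ¬ (A : ℤ) ∣ d) {γ₀ : ℤ√d} {m₀ : ℕ} (hm₀ : 0 < m₀) (hn₀ : γ₀.norm = (A : ℤ) ^ m₀)
    (hp₀ : ¬ ((A : ℤ) : ℤ√d) ∣ γ₀) :
    ∃ (h : ℕ) (α : ℤ√d), 0 < h ∧ h ≤ m₀ ∧ α.norm = (A : ℤ) ^ h ∧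
      ∀ (m : ℕ) (γ : ℤ√d), γ.norm = (A : ℤ) ^ m → ¬ ((A : ℤ) : ℤ√d) ∣ γ →
      ∃ (q : ℕ), m = h * q ∧ |γ.re| = |(α ^ q).re| ∧ |γ.im| = |(α ^ q).im| := by
  classical
  have hex : ∃ h : ℕ, 0 < h ∧ ∃ α : ℤ√d, α.norm = (A : ℤ) ^ h ∧ ¬ ((A : ℤ) : ℤ√d) ∣ α :=
    ⟨m₀, hm₀, γ₀, hn₀, hp₀⟩
  obtain ⟨hh, α, hn, hp⟩ := Nat.find_spec hex
  refine ⟨Nat.find hex, α, hh, Nat.find_min' hex ⟨hm₀, γ₀, hn₀, hp₀⟩, hn, ?_⟩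
  intro m γ hγ hpr
  obtain ⟨q, u, hq, hu, hor⟩ := gen_raw hA hA2 (by omega) hAd hh hn hp (by
    intro h' β h1 h2 h3
    by_contra h4
    exact Nat.find_min hex h2 ⟨h1, β, h3, h4⟩) m γ hγ hpr
  refine ⟨q, hq, ?_⟩
  obtain ⟨s1, s2⟩ := star_pow_abs α q
  rcases unit_abs hd hu with rfl | rfl <;> rcases hor with e | e <;> rw [e] <;> simp [s1, s2]

/-- generator lemma when an element of norm `A` is given -/
theorem gen_one {d : ℤ} {A : ℕ} (hA : A.Prime) (hA2 : 2 < A) (hd : d < -1)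
    (hAd : ¬ (A : ℤ) ∣ d) {α : ℤ√d} (hn : α.norm = (A : ℤ))
    (m : ℕ) (γ : ℤ√d) (hγ : γ.norm = (A : ℤ) ^ m) (hpr : ¬ ((A : ℤ) : ℤ√d) ∣ γ) :
    |γ.re| = |(α ^ m).re| ∧ |γ.im| = |(α ^ m).im| := by
  have hp : ¬ ((A : ℤ) : ℤ√d) ∣ α := by
    rintro ⟨z, hz⟩
    have := congrArg Zsqrtd.norm hz
    rw [Zsqrtd.norm_mul, hn, Zsqrtd.norm_intCast] at this
    have hA0 : (A : ℤ) ≠ 0 := by have := hA.pos; omega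
    have h1 : (A : ℤ) * z.norm = 1 := by
      apply mul_left_cancel₀ hA0; linarith
    have h2 := Int.le_of_dvd one_pos ⟨_, h1.symm⟩
    omega
  obtain ⟨q, u, hq, hu, hor⟩ := gen_raw hA hA2 (by omega) hAd one_pos (by rw [hn, pow_one]) hp (by
    intro h' β h1 h2; omega) m γ hγ hpr
  rw [one_mul] at hq
  subst hq
  obtain ⟨s1, s2⟩ := star_pow_abs α m
  rcases unit_abs hd hu with rfl | rfl <;> rcases hor with e | e <;> rw [e] <;> simp [s1, s2]


theorem dvd_prime_pow_abs {B : ℕ} (hB : B.Prime) {u : ℤ} {t : ℕ} (h : u ∣ (B : ℤ) ^ t) :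
    ∃ i ≤ t, |u| = (B : ℤ) ^ i := by
  have h1 : u.natAbs ∣ B ^ t := by
    have := Int.natAbs_dvd_natAbs.mpr h
    rwa [Int.natAbs_pow, Int.natAbs_natCast] at this
  obtain ⟨i, hi, e⟩ := (Nat.dvd_prime_pow hB).mp h1
  refine ⟨i, hi, ?_⟩
  rw [Int.abs_eq_natAbs, e]; push_cast; rfl

theorem abs_one_of {B : ℕ} (hB : B.Prime) {u : ℤ} {t : ℕ} (h : u ∣ (B : ℤ) ^ t)
    (hu : ¬ (B : ℤ) ∣ u) : |u| = 1 := by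
  obtain ⟨i, -, e⟩ := dvd_prime_pow_abs hB h
  cases i with
  | zero => simpa using e
  | succ i =>
    exfalso; apply hu
    rw [← dvd_abs, e]; exact dvd_pow_self _ (by omega)

theorem abs_le_of {B : ℕ} (hB : B.Prime) {u : ℤ} {t : ℕ} (h : u ∣ (B : ℤ) ^ t)
    (hu : ¬ (B : ℤ) ^ 2 ∣ u) : |u| ≤ B := by
  obtain ⟨i, -, e⟩ := dvd_prime_pow_abs hB h
  have hB1 := hB.one_lt
  match i, e with
  | 0, e => rw [e, pow_zero]; omega
  | 1, e => rw [e]; simp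
  | i+2, e =>
    exfalso; apply hu
    rw [← dvd_abs, e]; exact pow_dvd_pow _ (by omega)

theorem odd_dvd_of {B : ℕ} {u : ℤ} (hu : Odd u) {t s : ℕ} (h : u ∣ 2 ^ s * (B : ℤ) ^ t) :
    u ∣ (B : ℤ) ^ t := by
  have : IsCoprime u ((2 : ℤ) ^ s) := by
    apply IsCoprime.pow_right
    rw [Int.isCoprime_iff_gcd_eq_one, Int.gcd_comm]
    exact Int.isCoprime_iff_gcd_eq_one.mp
      ((Prime.coprime_iff_not_dvd Int.prime_two).mpr (by rw [← even_iff_two_dvd]; exact Int.not_even_iff_odd.mpr hu))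
  exact this.dvd_of_dvd_mul_left h

theorem lteImS {d : ℤ} {B : ℕ} (hB : B.Prime) (hd : (B : ℤ) ∣ d) {α : ℤ√d}
    (hx : ¬ (B : ℤ) ∣ α.re) {q : ℕ} (hq : ¬ B ∣ q) :
    ∃ u, (α ^ q).im = α.im * u ∧ ¬ (B : ℤ) ∣ u := by
  have hBp : Prime (B : ℤ) := Nat.prime_iff_prime_int.mp hB
  cases q with
  | zero => simp at hq
  | succ n =>
    obtain ⟨w, u, -, h⟩ := expandS α n
    refine ⟨_, h, ?_⟩
    intro hc
    have h1 : (B : ℤ) ∣ ((n : ℤ) + 1) * α.re ^ n := by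
      have h2 : (B : ℤ) ∣ d * α.im ^ 2 * u := (hd.mul_right _).mul_right _
      exact (dvd_add_left h2).mp hc
    rcases hBp.dvd_or_dvd h1 with h2 | h2
    · apply hq; exact_mod_cast h2
    · exact hx (hBp.dvd_of_dvd_pow h2)

theorem lteIm {d : ℤ} {B : ℕ} (hB : B.Prime) (hB5 : 5 ≤ B) (hd : (B : ℤ) ∣ d) {β : ℤ√d}
    (hx : ¬ (B : ℤ) ∣ β.re) :
    ∃ u, (β ^ B).im = β.im * u ∧ ¬ (B : ℤ) ^ 2 ∣ u := by
  have hBp : Prime (B : ℤ) := Nat.prime_iff_prime_int.mp hB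
  have hB0 : (B : ℤ) ≠ 0 := hBp.ne_zero
  obtain ⟨w, u, -, h⟩ := expandT β (B - 3)
  have e : B - 3 + 3 = B := by omega
  rw [e] at h
  refine ⟨_, h, ?_⟩
  intro hc
  have hch : (B : ℤ) ∣ ((B.choose 3 : ℕ) : ℤ) := by
    exact_mod_cast hB.dvd_choose_self (by norm_num) (by omega)
  have h3 : (B : ℤ) ^ 2 ∣ (d * β.im ^ 2) ^ 2 * u :=
    (pow_dvd_pow_of_dvd (hd.mul_right _) 2).mul_right _
  have h2 : (B : ℤ) ^ 2 ∣ ((B.choose 3 : ℕ) : ℤ) * β.re ^ (B-3) * (d * β.im ^ 2) := by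
    rw [pow_two]; exact mul_dvd_mul (hch.mul_right _) (hd.mul_right _)
  have h1 := (dvd_add_left h2).mp ((dvd_add_left h3).mp hc)
  have e2 : (((B - 3 : ℕ) : ℤ) + 3) = B := by omega
  rw [e2, pow_two] at h1
  have h4 := (mul_dvd_mul_iff_left hB0).mp h1
  exact hx (hBp.dvd_of_dvd_pow h4)

theorem cube_im {d : ℤ} (β : ℤ√d) : (β ^ 3).im = β.im * (3 * β.re ^ 2 + d * β.im ^ 2) := by
  rw [show 3 = 2 + 1 from rfl, pow_succ, pow_two, Zsqrtd.im_mul, Zsqrtd.re_mul, Zsqrtd.im_mul]; ring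

theorem lteIm3 {d : ℤ} (hd : (9 : ℤ) ∣ d) {β : ℤ√d}
    (hx : ¬ (3 : ℤ) ∣ β.re) : ¬ (3 : ℤ) ^ 2 ∣ (3 * β.re ^ 2 + d * β.im ^ 2) := by
  intro hc
  have h1 : (9 : ℤ) ∣ d * β.im ^ 2 := hd.mul_right _
  norm_num at hc
  have h2 := (dvd_add_left h1).mp hc
  rw [show (9 : ℤ) = 3 * 3 by norm_num] at h2
  have h3 := (mul_dvd_mul_iff_left (by norm_num)).mp h2
  exact hx (Int.prime_three.dvd_of_dvd_pow h3)

theorem sq_between {z c : ℤ} (hz : z ≠ 0) (h : c ^ 2 = 4 * z ^ 2 + 2 * z + 1) : False := by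
  have hc : |c| ^ 2 = 4 * z ^ 2 + 2 * z + 1 := by rw [sq_abs, h]
  have h0 := abs_nonneg c
  generalize |c| = c at *
  rcases lt_or_gt_of_ne hz with hz | hz
  · have h1 : c < -(2 * z) := by nlinarith
    have h2 : -(2*z) - 1 < c := by nlinarith
    omega
  · have h1 : 2 * z < c := by nlinarith
    have h2 : c < 2*z+1 := by nlinarith
    omega

theorem pow_big {B E : ℤ} (n : ℕ) (hn : B = n) (hB : 3 ≤ n) (h : 2 * B ≤ E) :
    B ^ 4 * E ^ 2 < 16 * E ^ n := by
  have hB3 : 3 ≤ B := by omega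
  have hE : 0 < E := by omega
  obtain ⟨p, rfl⟩ : ∃ p, n = p + 2 := ⟨n - 2, by omega⟩
  rw [pow_add, ← mul_assoc]
  apply mul_lt_mul_of_pos_right _ (by positivity)
  have hEB : B ≤ E := by omega
  rcases Nat.lt_or_ge p 3 with hp | hp
  · interval_cases p
    · subst hn; norm_num at *
    · subst hn; norm_num at *; omega
    · subst hn; norm_num at *; nlinarith
  · rcases Nat.eq_or_lt_of_le hp with hp | hp
    · subst hp; subst hn; norm_num at *
      have : (10:ℤ)^3 ≤ E^3 := pow_le_pow_left₀ (by norm_num) h 3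
      omega
    · calc B ^ 4 ≤ E ^ 4 := pow_le_pow_left₀ (by omega) hEB 4
        _ ≤ E ^ p := pow_le_pow_right₀ (by omega) hp
        _ < 16 * E ^ p := by have : 0 < E ^ p := by positivity
                             omega


theorem not_dvd_of_dvd_sum {p q : ℕ} (hp : p.Prime) (hq : q.Prime) (h : p ≠ q) (n : ℕ) :
    ¬ (p : ℤ) ∣ (q : ℤ) ^ n := by
  intro hc
  have h1 := (Nat.prime_iff_prime_int.mp hp).dvd_of_dvd_pow hc
  exact h ((Nat.prime_dvd_prime_iff_eq hp hq).mp (by exact_mod_cast h1))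

theorem two_pow_odd_mod_three (l : ℕ) : (2 : ℤ) ^ (2 * l + 1) % 3 = 2 := by
  induction l with
  | zero => norm_num
  | succ n ih => rw [show 2 * (n+1) + 1 = (2 * n + 1) + 2 by ring, pow_add]; omega

theorem two_pow_even_mod_three (l : ℕ) : (2 : ℤ) ^ (2 * l) % 3 = 1 := by
  induction l with
  | zero => norm_num
  | succ n ih => rw [show 2 * (n+1) = (2 * n) + 2 by ring, pow_add]; omega

theorem add_le_mul_aux {p q : ℤ} (hp : 2 ≤ p) (hq : 2 ≤ q) : p + q ≤ p * q := by nlinarith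

set_option maxHeartbeats 2000000 in
theorem part1 {A B k m₁ n₁ m₂ t : ℕ} (hA : A.Prime) (hB : B.Prime) (hA2 : 2 < A) (hB2 : 2 < B)
    (hAB : A ≠ B) (hk : 0 < k) (hm₁ : 0 < m₁) (hn₁ : 0 < n₁)
    (h1 : (A : ℤ) ^ m₁ = (B : ℤ) ^ n₁ + 2 ^ k)
    (h2 : (A : ℤ) ^ m₂ = (B : ℤ) ^ (n₁ + 2 * t) + 2 ^ k) : t = 0 := by
  have hAp : Prime (A : ℤ) := Nat.prime_iff_prime_int.mp hA
  have hBp : Prime (B : ℤ) := Nat.prime_iff_prime_int.mp hB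
  have hA2k : ∀ n, ¬ (A : ℤ) ∣ 2 ^ n := by
    intro n
    exact_mod_cast not_dvd_of_dvd_sum hA Nat.prime_two (by omega) n
  have hB2k : ∀ n, ¬ (B : ℤ) ∣ 2 ^ n := by
    intro n
    exact_mod_cast not_dvd_of_dvd_sum hB Nat.prime_two (by omega) n
  have hABn : ∀ n, ¬ (A : ℤ) ∣ (B : ℤ) ^ n := not_dvd_of_dvd_sum hA hB hAB
  have hBAn : ∀ n, ¬ (B : ℤ) ∣ (A : ℤ) ^ n := not_dvd_of_dvd_sum hB hA hAB.symm
  have hBodd : Odd (B : ℤ) := by exact_mod_cast hB.odd_of_ne_two (by omega)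
  have hAodd : Odd (A : ℤ) := by exact_mod_cast hA.odd_of_ne_two (by omega)
  obtain ⟨D, hD⟩ : ∃ D : ℤ, D = (B : ℤ) ^ n₁ * 2 ^ k := ⟨_, rfl⟩
  have hBn : (B : ℤ) ≤ (B : ℤ) ^ n₁ := by
    exact_mod_cast Nat.le_self_pow hn₁.ne' B
  have h2k : (2 : ℤ) ≤ 2 ^ k := by
    exact_mod_cast Nat.le_self_pow hk.ne' 2
  have hB3 : (3 : ℤ) ≤ B := by omega
  have hD2B : 2 * (B : ℤ) ≤ D := by rw [hD]; nlinarith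
  have hDB : (B : ℤ) ∣ D := by rw [hD]; exact (dvd_pow_self _ hn₁.ne').mul_right _
  have hD2 : (2 : ℤ) ∣ D := by rw [hD]; exact (dvd_pow_self _ hk.ne').mul_left _
  have hAD : ¬ (A : ℤ) ∣ -D := by
    rw [dvd_neg, hD]
    intro hc
    rcases hAp.dvd_or_dvd hc with h | h
    · exact hABn _ h
    · exact hA2k _ h
  -- primitivity
  have prim : ∀ (n m : ℕ) (y : ℤ), 0 < m → (A : ℤ) ^ m = (B : ℤ) ^ n + 2 ^ k →
      ¬ ((A : ℤ) : ℤ√(-D)) ∣ ⟨(B : ℤ) ^ n - 2 ^ k, y⟩ := by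
    intro n m y hm h hc
    rw [Zsqrtd.intCast_dvd] at hc
    have h3 : (A : ℤ) ∣ (B : ℤ) ^ n + 2 ^ k := by rw [← h]; exact dvd_pow_self _ hm.ne'
    have h4 := dvd_sub h3 hc.1
    have h5 : (B : ℤ) ^ n + 2 ^ k - ((B : ℤ) ^ n - 2 ^ k) = 2 ^ (k+1) := by ring
    simp only at h4
    rw [h5] at h4
    exact hA2k _ h4
  have hm₂ : 0 < m₂ := by
    rcases Nat.eq_zero_or_pos m₂ with h | h
    · subst h
      have : (0 : ℤ) < (B : ℤ) ^ (n₁ + 2 * t) := by positivity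
      rw [pow_zero] at h2; omega
    · exact h
  have nrm1 : (⟨(B : ℤ) ^ n₁ - 2 ^ k, 2⟩ : ℤ√(-D)).norm = (A : ℤ) ^ (2 * m₁) := by
    rw [norm_sq, mul_comm 2 m₁, pow_mul, h1, hD]; ring
  have nrm2 : (⟨(B : ℤ) ^ (n₁ + 2 * t) - 2 ^ k, 2 * (B : ℤ) ^ t⟩ : ℤ√(-D)).norm = (A : ℤ) ^ (2 * m₂) := by
    rw [norm_sq, mul_comm 2 m₂, pow_mul, h2, hD]; ring
  obtain ⟨h, α, hh, -, hαn, hgen⟩ := gen hA hA2 (d := -D) (by omega) hAD (by omega : 0 < 2 * m₁)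
    nrm1 (prim _ _ _ hm₁ h1)
  obtain ⟨q₁, -, -, him1⟩ := hgen _ _ nrm1 (prim _ _ _ hm₁ h1)
  obtain ⟨q, hq, hre, him⟩ := hgen _ _ nrm2 (prim _ _ _ hm₂ h2)
  simp only at him1 hre him
  have hy2 : α.im ∣ 2 := by
    rw [← dvd_abs, him1, dvd_abs]; exact im_dvd_im_pow _ _
  have hq0 : 0 < q := by
    rcases Nat.eq_zero_or_pos q with h' | h'
    · subst h'; omega
    · exact h'
  -- facts on coordinates of any power of α
  have hnormpow : ∀ r, (α ^ r).re ^ 2 + D * (α ^ r).im ^ 2 = (A : ℤ) ^ (h * r) := by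
    intro r
    have : (α ^ r).norm = (A : ℤ) ^ (h * r) := by rw [norm_pow', hαn, pow_mul]
    rw [norm_sq] at this; linarith
  have hreB : ∀ r, ¬ (B : ℤ) ∣ (α ^ r).re := by
    intro r hc
    apply hBAn (h * r)
    rw [← hnormpow r]
    exact dvd_add (dvd_pow hc two_ne_zero) (hDB.mul_right _)
  have hreodd : ∀ r, Odd (α ^ r).re := by
    intro r
    by_contra hc
    rw [Int.not_odd_iff_even] at hc
    have h3 : Odd ((A : ℤ) ^ (h * r)) := hAodd.pow
    rw [← hnormpow r] at h3
    have h4 : Even ((α ^ r).re ^ 2 + D * (α ^ r).im ^ 2) :=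
      (hc.pow_of_ne_zero two_ne_zero).add ((even_iff_two_dvd.mpr hD2).mul_right _)
    exact Int.not_even_iff_odd.mpr h3 h4
  have himdvd : (α ^ q).im ∣ 2 ^ 1 * (B : ℤ) ^ t := by
    rw [pow_one, ← dvd_abs, him, dvd_abs]
  rcases Nat.even_or_odd q with ⟨r, hr⟩ | hqodd
  · -- q even
    exfalso
    have hq2 : q = 2 * r := by omega
    have hN := hnormpow r
    have hexp : h * r = m₂ := by
      have : 2 * m₂ = 2 * (h * r) := by rw [hq, hq2]; ring
      omega
    rw [hexp, h2] at hN
    have him2 : (α ^ q).im = 2 * ((α ^ r).re * (α ^ r).im) := by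
      rw [hr, pow_add, Zsqrtd.im_mul]; ring
    rw [him2] at him
    set a := (α ^ r).re with ha
    set b := (α ^ r).im with hb
    have hab : a ^ 2 * b ^ 2 = ((B : ℤ) ^ t) ^ 2 := by
      have := congrArg (fun z => z ^ 2) him
      simp only [sq_abs] at this
      linarith
    have hprod : a ^ 2 * (D * b ^ 2) = (B : ℤ) ^ (n₁ + 2 * t) * 2 ^ k := by
      calc a ^ 2 * (D * b ^ 2) = D * (a ^ 2 * b ^ 2) := by ring
        _ = _ := by rw [hab, hD]; ring
    have hz : (a ^ 2 - (B : ℤ) ^ (n₁ + 2 * t)) * (a ^ 2 - 2 ^ k) = 0 := by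
      linear_combination a ^ 2 * hN - hprod
    rcases mul_eq_zero.mp hz with hz | hz
    · have : D * b ^ 2 = 2 ^ k := by linarith
      exact hB2k k (by rw [← this]; exact hDB.mul_right _)
    · have h3 : Odd (a ^ 2) := (hreodd r).pow
      have h4 : Even ((2 : ℤ) ^ k) := (even_two).pow_of_ne_zero hk.ne'
      rw [show a ^ 2 = 2 ^ k by linarith] at h3
      exact Int.not_even_iff_odd.mpr h3 h4
  · by_cases hBq : B ∣ q
    · exfalso
      obtain ⟨r, hr⟩ := hBq
      have hpow : α ^ q = (α ^ r) ^ B := by rw [hr, mul_comm, pow_mul]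
      set β := α ^ r with hβ
      have hb0 : β.im ≠ 0 := by
        intro hc
        have : (α ^ q).im = 0 := by
          rw [hpow]; have := im_dvd_im_pow β B; rw [hc] at this; exact zero_dvd_iff.mp this
        rw [this, abs_zero, abs_eq_zero] at him
        have : (0 : ℤ) < (B : ℤ) ^ t := by positivity
        omega
      have hE : β.re ^ 2 + D * β.im ^ 2 = (A : ℤ) ^ (h * r) := hnormpow r
      have hEB : ((A : ℤ) ^ (h * r)) ^ B = ((A : ℤ) ^ m₂) ^ 2 := by
        rw [← pow_mul, ← pow_mul]; congr 1
        rw [mul_comm m₂ 2, hq, hr]; ring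
      have hb1 : 1 ≤ β.im ^ 2 := by have := sq_pos_of_ne_zero hb0; omega
      -- size contradiction
      have size : ∀ u, (β ^ B).im = β.im * u → |u| ≤ B → False := by
        intro u hu hle
        have e1 : 2 * (B : ℤ) ^ t ≤ B * |β.im| := by
          calc 2 * (B : ℤ) ^ t = |2 * (B : ℤ) ^ t| := (abs_of_pos (by positivity)).symm
            _ = |β.im| * |u| := by rw [him, hpow, hu, abs_mul]
            _ ≤ B * |β.im| := by rw [mul_comm]; exact mul_le_mul_of_nonneg_right hle (abs_nonneg _)
        have e2 : (2 * (B : ℤ) ^ t) ^ 2 ≤ B ^ 2 * β.im ^ 2 := by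
          rw [← sq_abs β.im, ← mul_pow]
          exact pow_le_pow_left₀ (by positivity) e1 2
        set E := (A : ℤ) ^ (h * r) with hEdef
        have hDpos : 0 < D := by omega
        have e3 : D * β.im ^ 2 ≤ E := by have := sq_nonneg β.re; linarith
        have e4 : 4 * ((B : ℤ) ^ (n₁ + 2 * t) * 2 ^ k) ≤ B ^ 2 * E := by
          calc 4 * ((B : ℤ) ^ (n₁ + 2 * t) * 2 ^ k) = D * (2 * (B : ℤ) ^ t) ^ 2 := by rw [hD]; ring
            _ ≤ D * (B ^ 2 * β.im ^ 2) := mul_le_mul_of_nonneg_left e2 hDpos.le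
            _ = B ^ 2 * (D * β.im ^ 2) := by ring
            _ ≤ B ^ 2 * E := mul_le_mul_of_nonneg_left e3 (by positivity)
        have hP : (2 : ℤ) ≤ (B : ℤ) ^ (n₁ + 2 * t) := by
          have : (B : ℤ) ≤ (B : ℤ) ^ (n₁ + 2 * t) := by
            exact_mod_cast Nat.le_self_pow (by omega) B
          omega
        have e5 : 4 * (A : ℤ) ^ m₂ ≤ B ^ 2 * E := by
          rw [h2]; have := add_le_mul_aux hP h2k; linarith
        have e6 : (4 * (A : ℤ) ^ m₂) ^ 2 ≤ (B ^ 2 * E) ^ 2 := pow_le_pow_left₀ (by positivity) e5 2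
        have e7 : 16 * E ^ B ≤ B ^ 4 * E ^ 2 := by
          rw [hEB]; calc _ = (4 * (A : ℤ) ^ m₂) ^ 2 := by ring
            _ ≤ _ := e6
            _ = _ := by ring
        have e8 := pow_big (B := (B : ℤ)) (E := E) B rfl (by omega)
          (le_trans hD2B (le_trans (le_mul_of_one_le_right hDpos.le hb1) e3))
        exact absurd e7 (not_le.mpr e8)
      have hudvd : ∀ u, (β ^ B).im = β.im * u → u ∣ 2 ^ 1 * (B : ℤ) ^ t := by
        intro u hu
        refine dvd_trans ?_ himdvd
        rw [hpow, hu]; exact dvd_mul_left _ _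
      have hpar : ∀ u, (β ^ B).im = β.im * u → Odd u := by
        intro u hu
        obtain ⟨p, hp⟩ : ∃ p, B = p + 1 := ⟨B - 1, by omega⟩
        obtain ⟨w, v, -, hv⟩ := expandS β p
        rw [← hp, hu] at hv
        have hv' := mul_left_cancel₀ hb0 hv
        rw [hv']
        have : ((p : ℤ) + 1) = B := by rw [hp]; push_cast; rfl
        rw [this]
        apply Odd.add_even
        · exact hBodd.mul (hreodd r).pow
        · exact (((even_iff_two_dvd.mpr hD2).neg).mul_right _).mul_right _
      rcases Nat.lt_or_ge B 5 with hB5 | hB5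
      · have hB3' : B = 3 := by
          interval_cases B
          · rfl
          · exact absurd hB (by norm_num)
        have hu := cube_im β
        by_cases h9 : ¬ (3 : ℤ) ^ 2 ∣ (3 * β.re ^ 2 + -D * β.im ^ 2)
        · rw [← hB3'] at hu
          apply size _ hu
          apply abs_le_of hB (odd_dvd_of (hpar _ hu) (hudvd _ hu))
          rw [hB3']; exact_mod_cast h9
        · push Not at h9
          have hre3 : ¬ (3 : ℤ) ∣ β.re := by have := hreB r; rw [hB3'] at this; exact_mod_cast this
          have hn1 : n₁ = 1 := by
            by_contra hne
            refine lteIm3 ?_ hre3 h9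
            rw [dvd_neg, hD, hB3']
            apply Dvd.dvd.mul_right
            exact pow_dvd_pow (3 : ℤ) (by omega : 2 ≤ n₁)
          have hD3 : D = 3 * 2 ^ k := by rw [hD, hn1, hB3']; norm_num
          have hfac : 3 * β.re ^ 2 + -D * β.im ^ 2 = 3 * (β.re ^ 2 - 2 ^ k * β.im ^ 2) := by
            linear_combination (-β.im ^ 2) * hD3
          rcases Nat.even_or_odd k with ⟨l, hl⟩ | ⟨l, hl⟩
          · -- k even
            set z := 2 ^ l * β.im with hz
            have hz2 : 2 ^ k * β.im ^ 2 = z ^ 2 := by rw [hz, hl]; ring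
            have hz0 : z ≠ 0 := mul_ne_zero (by positivity) hb0
            have hfac2 : 3 * β.re ^ 2 + -D * β.im ^ 2 = 3 * ((β.re - z) * (β.re + z)) := by
              rw [hfac, hz2]; ring
            have hu' : (β ^ B).im = β.im * (3 * β.re ^ 2 + -D * β.im ^ 2) := by rw [hB3']; exact hu
            have hdv := odd_dvd_of (hpar _ hu') (hudvd _ hu')
            rw [hfac2] at hdv
            have d1 : (β.re - z) ∣ (B : ℤ) ^ t := dvd_trans ⟨3 * (β.re + z), by ring⟩ hdv
            have d2 : (β.re + z) ∣ (B : ℤ) ^ t := dvd_trans ⟨3 * (β.re - z), by ring⟩ hdv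
            have hEsq : ∃ c : ℤ, β.re ^ 2 + 3 * z ^ 2 = c ^ 2 := by
              have hev : Even (h * r) := by
                have : 2 * m₂ = 3 * (h * r) := by rw [hq, hr, hB3']; ring
                exact ⟨h * r / 2, by omega⟩
              obtain ⟨e, he⟩ := hev
              refine ⟨(A : ℤ) ^ e, ?_⟩
              rw [← pow_mul, mul_comm e 2, two_mul, ← he, ← hE]
              linear_combination (-β.im ^ 2) * hD3 - 3 * hz2
            obtain ⟨c, hc⟩ := hEsq
            have hnot : ¬ ((B : ℤ) ∣ β.re - z ∧ (B : ℤ) ∣ β.re + z) := by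
              rintro ⟨c1, c2⟩
              have c3 := dvd_add c1 c2
              rw [show β.re - z + (β.re + z) = 2 * β.re by ring] at c3
              rcases hBp.dvd_or_dvd c3 with c4 | c4
              · exact hB2k 1 (by simpa using c4)
              · exact hreB r c4
            have hone : |β.re - z| = 1 ∨ |β.re + z| = 1 := by
              by_cases c1 : (B : ℤ) ∣ β.re - z
              · right; exact abs_one_of hB d2 (fun c2 => hnot ⟨c1, c2⟩)
              · left; exact abs_one_of hB d1 c1
            have hz0' : -z ≠ 0 := neg_ne_zero.mpr hz0
            rcases hone with c1 | c1 <;> rcases (abs_eq one_pos.le).mp c1 with c2 | c2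
            · have : β.re = z + 1 := by linarith
              rw [this] at hc
              exact sq_between hz0 (c := c) (by rw [← hc]; ring)
            · have : β.re = z - 1 := by linarith
              rw [this] at hc
              exact sq_between hz0' (c := c) (by rw [← hc]; ring)
            · have : β.re = -z + 1 := by linarith
              rw [this] at hc
              exact sq_between hz0' (c := c) (by rw [← hc]; ring)
            · have : β.re = -z - 1 := by linarith
              rw [this] at hc
              exact sq_between hz0 (c := c) (by rw [← hc]; ring)
          · -- k odd
            rw [hfac, show (3 : ℤ) ^ 2 = 3 * 3 by norm_num] at h9
            have h3 := (mul_dvd_mul_iff_left (by norm_num)).mp h9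
            have h4 : (2 : ℤ) ^ k % 3 = 2 := by
              rw [hl]; exact two_pow_odd_mod_three l
            have h5 : β.re % 3 = 1 ∨ β.re % 3 = 2 := by omega
            have h6 : β.im % 3 = 0 ∨ β.im % 3 = 1 ∨ β.im % 3 = 2 := by omega
            have h7 := Int.emod_eq_zero_of_dvd h3
            rcases h5 with h5 | h5 <;> rcases h6 with h6 | h6 | h6 <;>
              simp [Int.sub_emod, Int.mul_emod, pow_two, h4, h5, h6] at h7
      · have hre' : ¬ (B : ℤ) ∣ β.re := hreB r
        obtain ⟨u, hu, hu2⟩ := lteIm hB hB5 (dvd_neg.mpr hDB) hre'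
        exact size u hu (abs_le_of hB (odd_dvd_of (hpar _ hu) (hudvd _ hu)) hu2)
    · have hx : ¬ (B : ℤ) ∣ α.re := by have := hreB 1; rwa [pow_one] at this
      obtain ⟨u, hu, hu2⟩ := lteImS hB (dvd_neg.mpr hDB) hx hBq
      have hα0 : α.im ≠ 0 := by
        intro hc; rw [hc] at hy2; have := zero_dvd_iff.mp hy2; omega
      have huodd : Odd u := by
        obtain ⟨p, hp⟩ : ∃ p, q = p + 1 := ⟨q - 1, by omega⟩
        obtain ⟨w, v, -, hv⟩ := expandS α p
        rw [← hp, hu] at hv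
        have hv' := mul_left_cancel₀ hα0 hv
        rw [hv']
        have : ((p : ℤ) + 1) = q := by rw [hp]; push_cast; rfl
        rw [this]
        apply Odd.add_even
        · have h3 := hreodd 1
          rw [pow_one] at h3
          have h4 : Odd (q : ℤ) := by exact_mod_cast hqodd
          exact h4.mul h3.pow
        · exact (((even_iff_two_dvd.mpr hD2).neg).mul_right _).mul_right _
      have hu1 : |u| = 1 := abs_one_of hB (t := t) (odd_dvd_of huodd (s := 1)
        (dvd_trans (by rw [hu]; exact dvd_mul_left _ _) himdvd)) hu2
      rw [hu, abs_mul α.im, hu1, mul_one, abs_of_pos (by positivity)] at him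
      have h3 : 2 * (B : ℤ) ^ t ∣ 2 * 1 := by rw [him, abs_dvd]; simpa using hy2
      have h4 := (mul_dvd_mul_iff_left (by norm_num : (2 : ℤ) ≠ 0)).mp h3
      by_contra ht
      have h5 : (B : ℤ) ∣ 1 := dvd_trans (dvd_pow_self _ ht) h4
      have := Int.le_of_dvd one_pos h5
      omega


theorem fermat_val {d : ℤ} (hd : (2 : ℤ) ∣ d) (α : ℤ√d) (h1 : α.re = 1) (h2 : α.im = 1)
    {r : ℕ} (hr : Odd r) (f : ℕ) :
    Odd (α ^ (2 ^ f * r)).re ∧ ∃ o : ℤ, Odd o ∧ (α ^ (2 ^ f * r)).im = 2 ^ f * o := by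
  have hde : Even d := even_iff_two_dvd.mpr hd
  induction f with
  | zero =>
    obtain ⟨p, rfl⟩ := hr
    obtain ⟨w, u, e1, e2⟩ := expandS α (2 * p)
    rw [h1, h2] at e1 e2
    rw [pow_zero, one_mul]
    refine ⟨?_, _, ?_, (one_mul _).symm⟩
    · rw [e1]; simp only [one_pow, mul_one]
      exact odd_one.add_even (hde.mul_right _)
    · rw [e2]; simp only [one_pow, mul_one, one_mul]
      apply Odd.add_even _ (hde.mul_right _)
      push_cast; exact ⟨p, rfl⟩
  | succ f ih =>
    obtain ⟨i1, o, ho, i2⟩ := ih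
    have e : α ^ (2 ^ (f+1) * r) = α ^ (2 ^ f * r) * α ^ (2 ^ f * r) := by
      rw [← pow_add]; congr 1; ring
    rw [e, Zsqrtd.re_mul, Zsqrtd.im_mul]
    refine ⟨?_, (α ^ (2 ^ f * r)).re * o, i1.mul ho, ?_⟩
    · exact (i1.mul i1).add_even ((hde.mul_right _).mul_right _)
    · rw [i2]; ring

theorem odd_pow_two_pow (A : ℤ) (hA : Odd A) (r f : ℕ) :
    (2 : ℤ) ^ (f + 3) ∣ A ^ (2 ^ (f + 1) * r) - 1 := by
  induction f with
  | zero =>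
    have h1 : (8 : ℤ) ∣ A ^ 2 - 1 := Int.eight_dvd_sq_sub_one_of_odd hA
    have h2 : A ^ 2 - 1 ∣ (A ^ 2) ^ r - 1 := by simpa using sub_dvd_pow_sub_pow (A ^ 2) 1 r
    rw [← pow_mul] at h2
    norm_num
    exact h1.trans h2
  | succ f ih =>
    have e : A ^ (2 ^ (f+1+1) * r) - 1 = (A ^ (2 ^ (f+1) * r) - 1) * (A ^ (2 ^ (f+1) * r) + 1) := by
      rw [show 2 ^ (f+1+1) * r = (2 ^ (f+1) * r) * 2 by ring, pow_mul]; ring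
    rw [e, show f + 1 + 3 = (f + 3) + 1 by ring, pow_succ]
    apply mul_dvd_mul ih
    rw [← even_iff_two_dvd]
    exact hA.pow.add_one

theorem fermat_core {d : ℤ} (hd : (2 : ℤ) ∣ d) (α : ℤ√d) (h1 : α.re = 1) (h2 : α.im = 1)
    {s : ℕ} (hs : 0 < s) (hse : Even s) (him : (α ^ (2 * s + 1)).im = 1) : False := by
  obtain ⟨f, r, hr, e⟩ := Nat.exists_eq_two_pow_mul_odd hs.ne'
  have hf : f ≠ 0 := by
    rintro rfl
    rw [pow_zero, one_mul] at e
    rw [e] at hse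
    exact Nat.not_even_iff_odd.mpr hr hse
  obtain ⟨g, rfl⟩ := Nat.exists_eq_succ_of_ne_zero hf
  obtain ⟨hX, o, ho, hY⟩ := fermat_val hd α h1 h2 hr (g+1)
  rw [Nat.succ_eq_add_one] at e
  rw [← e] at hX hY
  have hN := norm_pow' α s
  rw [norm_sq, norm_sq, h1, h2] at hN
  rw [show 2 * s + 1 = s + s + 1 by ring, pow_succ, pow_add] at him
  simp only [Zsqrtd.re_mul, Zsqrtd.im_mul, h1, h2, mul_one] at him
  set X := (α ^ s).re
  set Y := (α ^ s).im
  have hAodd : Odd (1 ^ 2 - d * 1 ^ 2 : ℤ) := by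
    norm_num; exact odd_one.sub_even (even_iff_two_dvd.mpr hd)
  have k1 := odd_pow_two_pow _ hAodd r g
  rw [← e, ← hN] at k1
  have k2 : (2 : ℤ) ^ (g + 3) ∣ 2 * d * Y ^ 2 := by
    obtain ⟨c, rfl⟩ := hd
    rw [hY]; exact ⟨2 ^ (g+1) * c * o ^ 2, by ring⟩
  have k3 : 2 ^ (g + 3) ∣ 2 * X * Y := by
    have : 2 * X * Y = -((X ^ 2 - d * Y ^ 2 - 1) + 2 * d * Y ^ 2) := by linarith
    rw [this, dvd_neg]; exact dvd_add k1 k2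
  rw [hY, show 2 * X * (2 ^ (g+1) * o) = 2 ^ (g+2) * (X * o) by ring, pow_succ] at k3
  have k4 := (mul_dvd_mul_iff_left (by positivity)).mp k3
  exact Int.not_even_iff_odd.mpr (hX.mul ho) (even_iff_two_dvd.mpr k4)

theorem fermat_even {d : ℤ} {k : ℕ} (hk : 2 ≤ k) (hd : d = -2 ^ k) (α : ℤ√d) (h1 : α.re = 1)
    (h2 : α.im = 1) {q : ℕ} (hq : 3 ≤ q) (hqo : Odd q) (him : |(α ^ q).im| = 1)
    (hre : (2 : ℤ) ^ (k+1) ∣ (α ^ q).re - 1 ∨ (2 : ℤ) ^ (k+1) ∣ (α ^ q).re + 1) : False := by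
  have h4 : (4 : ℤ) ∣ 2 ^ k := by
    have := pow_dvd_pow (2 : ℤ) hk; norm_num at this; exact this
  have hd4 : (4 : ℤ) ∣ d := by rw [hd]; exact dvd_neg.mpr h4
  have hq4 : q % 4 = 1 ∨ q % 4 = 3 := by obtain ⟨c, rfl⟩ := hqo; omega
  rcases hq4 with hq4 | hq4
  · obtain ⟨s, hs⟩ : ∃ s, q = 2 * (2 * s) + 1 := ⟨q / 4, by omega⟩
    apply fermat_core (dvd_trans (by norm_num) hd4) α h1 h2 (s := 2 * s) (by omega) (by simp)
    rw [← hs]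
    obtain ⟨w, u, -, e2⟩ := expandS α (q-1)
    rw [h1, h2, show q - 1 + 1 = q by omega] at e2
    simp only [one_pow, mul_one, one_mul] at e2
    have e3 : (4 : ℤ) ∣ d * u := hd4.mul_right _
    rcases (abs_eq one_pos.le).mp him with h | h <;> omega
  · obtain ⟨p, rfl⟩ : ∃ p, q = p + 3 := ⟨q - 3, by omega⟩
    obtain ⟨w, u, e1, -⟩ := expandT α p
    rw [h1, h2] at e1
    simp only [one_pow, mul_one] at e1
    have hc : Odd ((p+3).choose 2) := by
      rw [Nat.choose_two_right]
      obtain ⟨c, rfl⟩ : ∃ c, p = 4 * c := ⟨p / 4, by omega⟩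
      rw [show (4 * c + 3) * (4 * c + 3 - 1) = 2 * ((4 * c + 3) * (2 * c + 1)) by
        rw [show 4 * c + 3 - 1 = 2 * (2 * c + 1) by omega]; ring]
      rw [Nat.mul_div_cancel_left _ (by norm_num)]
      exact Odd.mul ⟨2 * c + 1, by ring⟩ ⟨c, rfl⟩
    have hc' : Odd (((p+3).choose 2 : ℕ) : ℤ) := by exact_mod_cast hc
    have e2 : (2 : ℤ) ^ (k + 1) ∣ d ^ 2 * w := by
      apply Dvd.dvd.mul_right
      rw [hd]; rw [neg_sq, ← pow_mul]; exact pow_dvd_pow _ (by omega)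
    rcases hre with hre | hre
    · have h5 : (2 : ℤ) ^ (k+1) ∣ (((p+3).choose 2 : ℕ) : ℤ) * d := by
        rw [show (((p+3).choose 2 : ℕ) : ℤ) * d = ((α ^ (p+3)).re - 1) - d ^ 2 * w by
          rw [e1]; ring]
        exact dvd_sub hre e2
      rw [hd, mul_neg, dvd_neg, pow_succ, mul_comm _ ((2 : ℤ) ^ k)] at h5
      have h6 := (mul_dvd_mul_iff_left (by positivity)).mp h5
      exact Int.not_even_iff_odd.mpr hc' (even_iff_two_dvd.mpr h6)
    · have h5 : (4 : ℤ) ∣ 2 := by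
        have h6 : (4 : ℤ) ∣ 2 ^ (k+1) := h4.trans (pow_dvd_pow _ (by omega))
        have := dvd_sub (dvd_sub (h6.trans hre) (h6.trans e2)) (hd4.mul_left (((p+3).choose 2 : ℕ) : ℤ))
        have e3 : (α ^ (p+3)).re + 1 - d ^ 2 * w - (((p+3).choose 2 : ℕ) : ℤ) * d = 2 := by
          rw [e1]; ring
        rwa [e3] at this
      norm_num at h5

theorem fermat_one {d : ℤ} (hd : d = -2) (α : ℤ√d) (h1 : α.re = 1)
    (h2 : α.im = 1) {q : ℕ} (hq : 3 ≤ q) (hqo : Odd q) (him : |(α ^ q).im| = 1)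
    (hre : (8 : ℤ) ∣ (α ^ q).re - 1 ∨ (8 : ℤ) ∣ (α ^ q).re + 1) : False := by
  subst hd
  have hN := norm_pow' α q
  rw [norm_sq, norm_sq, h1, h2, ← sq_abs (α^q).im, him] at hN
  norm_num at hN
  have h16 : ((α ^ q).re ^ 2) % 16 = 1 := by
    rcases hre with ⟨c, hc⟩ | ⟨c, hc⟩
    · have : (α ^ q).re = 8 * c + 1 := by linarith
      rw [this, show (8 * c + 1) ^ 2 = 16 * (4 * c ^ 2 + c) + 1 by ring]; omega
    · have : (α ^ q).re = 8 * c - 1 := by linarith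
      rw [this, show (8 * c - 1) ^ 2 = 16 * (4 * c ^ 2 - c) + 1 by ring]; omega
  have h3 : ∀ n : ℕ, (3 : ℤ) ^ (4 * n + 3) % 16 = 11 := by
    intro n
    induction n with
    | zero => norm_num
    | succ n ih => rw [show 4 * (n + 1) + 3 = 4 * n + 3 + 4 by ring, pow_add]; omega
  have hq4 : q % 4 = 1 ∨ q % 4 = 3 := by obtain ⟨c, rfl⟩ := hqo; omega
  rcases hq4 with hq4 | hq4
  · obtain ⟨s, hs⟩ : ∃ s, q = 2 * (2 * s) + 1 := ⟨q / 4, by omega⟩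
    apply fermat_core (by norm_num) α h1 h2 (s := 2 * s) (by omega) (by simp)
    rw [← hs]
    have key : ∀ n : ℕ, (α ^ (4 * n + 1)).re % 4 = 1 ∧ (α ^ (4 * n + 1)).im % 4 = 1 := by
      intro n
      induction n with
      | zero => rw [mul_zero, zero_add, pow_one, h1, h2]; norm_num
      | succ n ih =>
        have e : α ^ (4 * (n + 1) + 1) = α ^ (4 * n + 1) * α * α * α * α := by ring
        rw [e]
        revert ih
        generalize α ^ (4 * n + 1) = β
        rintro ⟨i1, i2⟩
        simp only [Zsqrtd.re_mul, Zsqrtd.im_mul, h1, h2]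
        omega
    have := (key s).2
    rw [show 4 * s + 1 = q by omega] at this
    rcases (abs_eq one_pos.le).mp him with h | h <;> omega
  · have := h3 (q / 4)
    rw [show 4 * (q/4) + 3 = q by omega] at this
    omega


theorem pow_even_sub {M x : ℤ} (h : M ∣ x ^ 2 - 1) (n : ℕ) : M ∣ x ^ (2 * n) - 1 := by
  rw [pow_mul]
  exact h.trans (by simpa using sub_dvd_pow_sub_pow (x ^ 2) 1 n)

theorem pow_odd_sub {M x : ℤ} (h : M ∣ x ^ 2 - 1) (n : ℕ) : M ∣ x ^ (2 * n + 1) - x := by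
  have := (pow_even_sub h n).mul_right x
  rwa [show (x ^ (2 * n) - 1) * x = x ^ (2 * n + 1) - x by ring] at this

theorem two_pow_of_dvd {u : ℤ} {k : ℕ} (hu : 0 < u) (h : u ∣ 2 ^ k) : ∃ i ≤ k, u = 2 ^ i := by
  obtain ⟨i, hi, e⟩ := dvd_prime_pow_abs Nat.prime_two (u := u) (t := k) (by exact_mod_cast h)
  exact ⟨i, hi, by rw [abs_of_pos hu] at e; exact_mod_cast e⟩

theorem me_odd {A B k i j mo c : ℕ} (hA : A.Prime) (hB : B.Prime) (hA2 : 2 < A) (hB2 : 2 < B)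
    (hj : 0 < j)
    (h1 : (A : ℤ) ^ (2 * i) = (B : ℤ) ^ (2 * j) + 2 ^ k)
    (h2 : (A : ℤ) ^ mo = (B : ℤ) ^ (2 * c + 1) + 2 ^ k) : False := by
  have hBodd : Odd (B : ℤ) := by exact_mod_cast hB.odd_of_ne_two (by omega)
  have hAodd : Odd (A : ℤ) := by exact_mod_cast hA.odd_of_ne_two (by omega)
  have hA8 := Int.eight_dvd_sq_sub_one_of_odd hAodd
  have hB8 := Int.eight_dvd_sq_sub_one_of_odd hBodd
  have hx : Odd ((A : ℤ) ^ i) := hAodd.pow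
  have hy : Odd ((B : ℤ) ^ j) := hBodd.pow
  have hy3 : 3 ≤ (B : ℤ) ^ j := by
    have : (B : ℤ) ≤ (B : ℤ) ^ j := by exact_mod_cast Nat.le_self_pow hj.ne' B
    omega
  have hxpos : 0 < (A : ℤ) ^ i := by positivity
  have hfac : ((A : ℤ) ^ i - (B : ℤ) ^ j) * ((A : ℤ) ^ i + (B : ℤ) ^ j) = 2 ^ k := by
    rw [mul_comm 2 i, mul_comm 2 j, pow_mul, pow_mul] at h1; linarith
  obtain ⟨x, hxd⟩ : ∃ x, x = (A : ℤ) ^ i := ⟨_, rfl⟩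
  obtain ⟨y, hyd⟩ : ∃ y, y = (B : ℤ) ^ j := ⟨_, rfl⟩
  rw [← hxd] at hx hxpos hfac
  rw [← hyd] at hy hy3 hfac
  have h2k : (0 : ℤ) < 2 ^ k := by positivity
  have hsub : 0 < x - y := by
    by_contra hc
    have := mul_nonpos_of_nonpos_of_nonneg (not_lt.mp hc) (by omega : 0 ≤ x + y)
    omega
  obtain ⟨a, -, ha⟩ := two_pow_of_dvd hsub ⟨_, hfac.symm⟩
  obtain ⟨b, -, hb⟩ := two_pow_of_dvd (by omega : 0 < x + y) ⟨_, (mul_comm _ _ |>.trans hfac).symm⟩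
  have hab : k = a + b := by
    rw [ha, hb, ← pow_add] at hfac
    exact (Int.pow_right_injective (by norm_num : 1 < (2 : ℤ).natAbs) hfac).symm
  obtain ⟨x', hx'⟩ := hx
  obtain ⟨y', hy'⟩ := hy
  have hb3 : 3 ≤ b := by
    by_contra hc
    have : b ≤ 2 := by omega
    have := pow_le_pow_right₀ (by norm_num : (1 : ℤ) ≤ 2) this
    omega
  obtain ⟨b', rfl⟩ : ∃ b', b = b' + 3 := ⟨b - 3, by omega⟩
  have ha1 : a = 1 := by
    rcases Nat.lt_or_ge a 2 with h | h
    · interval_cases a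
      · omega
      · rfl
    · obtain ⟨a', rfl⟩ : ∃ a', a = a' + 2 := ⟨a - 2, by omega⟩
      rw [pow_add] at ha hb; omega
  subst ha1
  rw [pow_add] at hb
  norm_num at ha hb
  have hyv : y = 4 * 2 ^ b' - 1 := by omega
  have hxv : x = 4 * 2 ^ b' + 1 := by omega
  have hk16 : (2 : ℤ) ^ k = 16 * 2 ^ b' := by rw [hab]; ring
  -- B ≡ 3 mod 4
  have hB4 : (B : ℤ) % 4 = 3 := by
    rcases Nat.even_or_odd' j with ⟨e, he | he⟩
    · have := pow_even_sub hB8 e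
      rw [← he, ← hyd] at this; omega
    · have := pow_odd_sub hB8 e
      rw [← he, ← hyd] at this; omega
  have hBn := pow_odd_sub hB8 c
  have hA4 : (A : ℤ) % 4 = 3 := by
    rcases Nat.even_or_odd' mo with ⟨e, he | he⟩
    · have := pow_even_sub hA8 e
      rw [← he] at this; omega
    · have := pow_odd_sub hA8 e
      rw [← he] at this; omega
  rcases Nat.even_or_odd' i with ⟨e, he | he⟩
  · rw [he, mul_comm, pow_mul] at hxd
    obtain ⟨z, hz⟩ : ∃ z, z = (A : ℤ) ^ e := ⟨_, rfl⟩
    have hzpos : 0 < z := by rw [hz]; positivity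
    have hzodd : Odd z := by rw [hz]; exact hAodd.pow
    rw [← hz] at hxd
    have hf2 : (z - 1) * (z + 1) = 2 ^ (b' + 2) := by
      rw [pow_add]; norm_num; linarith
    have hz1 : 0 < z - 1 := by
      by_contra hc
      have h3 : z = 1 := by omega
      rw [h3] at hf2
      have : (0 : ℤ) < 2 ^ (b'+2) := by positivity
      omega
    obtain ⟨f, -, hf⟩ := two_pow_of_dvd hz1 ⟨_, hf2.symm⟩
    obtain ⟨g, -, hg⟩ := two_pow_of_dvd (by omega : 0 < z + 1) ⟨_, (mul_comm _ _ |>.trans hf2).symm⟩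
    obtain ⟨z', hz'⟩ := hzodd
    have hz3 : z = 3 := by
      rcases Nat.lt_or_ge f 2 with h | h
      · interval_cases f <;> omega
      · obtain ⟨f', rfl⟩ : ∃ f', f = f' + 2 := ⟨f - 2, by omega⟩
        rcases Nat.lt_or_ge g 2 with h' | h'
        · interval_cases g <;> omega
        · obtain ⟨g', rfl⟩ : ∃ f', g = f' + 2 := ⟨g - 2, by omega⟩
          rw [pow_add] at hf hg; omega
    have hA3 : A = 3 := by
      have : A ∣ 3 := by
        have h5 : (A : ℤ) ∣ A ^ e := dvd_pow_self _ (by rintro rfl; rw [pow_zero] at hz; omega)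
        rw [← hz, hz3] at h5; exact_mod_cast h5
      exact (Nat.prime_dvd_prime_iff_eq hA Nat.prime_three).mp this
    have hb2 : (2 : ℤ) ^ b' = 2 := by rw [hz3] at hxd; omega
    have hB7 : (B : ℤ) % 8 = 7 := by
      rcases Nat.even_or_odd' j with ⟨e, he | he⟩
      · have := pow_even_sub hB8 e
        rw [← he, ← hyd] at this; omega
      · have := pow_odd_sub hB8 e
        rw [← he, ← hyd] at this; omega
    rcases Nat.even_or_odd' mo with ⟨e, he | he⟩
    · have := pow_even_sub hA8 e
      rw [← he] at this; omega
    · have := pow_odd_sub hA8 e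
      rw [← he] at this; omega
  · have := pow_odd_sub hA8 e
    rw [← he, ← hxd] at this; omega

theorem prime_three_of {A n : ℕ} (hA : A.Prime) (h : (3 : ℤ) ∣ (A : ℤ) ^ n) : A = 3 := by
  have h1 := Int.prime_three.dvd_of_dvd_pow h
  exact ((Nat.prime_dvd_prime_iff_eq Nat.prime_three hA).mp (by exact_mod_cast h1)).symm

theorem sq_mod_three {x : ℤ} (h : ¬ (3 : ℤ) ∣ x) : (3 : ℤ) ∣ x ^ 2 - 1 := by
  have : x % 3 = 1 ∨ x % 3 = 2 := by omega
  rcases this with h | h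
  · obtain ⟨c, hc⟩ : ∃ c, x = 3 * c + 1 := ⟨x / 3, by omega⟩
    exact ⟨3 * c ^ 2 + 2 * c, by rw [hc]; ring⟩
  · obtain ⟨c, hc⟩ : ∃ c, x = 3 * c + 2 := ⟨x / 3, by omega⟩
    exact ⟨3 * c ^ 2 + 4 * c + 1, by rw [hc]; ring⟩

theorem k_odd_case {A B l e j mo c : ℕ} (hA : A.Prime) (hB : B.Prime) (hA2 : 2 < A) (hB2 : 2 < B)
    (hj : 0 < j)
    (h1 : (A : ℤ) ^ (2 * e + 1) = (B : ℤ) ^ (2 * j) + 2 ^ (2 * l + 1))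
    (h2 : (A : ℤ) ^ mo = (B : ℤ) ^ (2 * c + 1) + 2 ^ (2 * l + 1)) : False := by
  have hBodd : Odd (B : ℤ) := by exact_mod_cast hB.odd_of_ne_two (by omega)
  have hAodd : Odd (A : ℤ) := by exact_mod_cast hA.odd_of_ne_two (by omega)
  have hA8 := Int.eight_dvd_sq_sub_one_of_odd hAodd
  have hB8 := Int.eight_dvd_sq_sub_one_of_odd hBodd
  have a1 := pow_odd_sub hA8 e
  have b1 := pow_even_sub hB8 j
  have b2 := pow_odd_sub hB8 c
  have a2 : (8 : ℤ) ∣ (A : ℤ) ^ mo - 1 ∨ (8 : ℤ) ∣ (A : ℤ) ^ mo - A := by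
    rcases Nat.even_or_odd' mo with ⟨e, he | he⟩
    · left; rw [he]; exact pow_even_sub hA8 e
    · right; rw [he]; exact pow_odd_sub hA8 e
  have hA3 : B ≠ 3 → A = 3 := by
    intro hne
    apply prime_three_of hA (n := 2 * e + 1)
    have h3 : ¬ (3 : ℤ) ∣ B := fun h => hne (prime_three_of hB (n := 1) (by simpa using h))
    have := pow_even_sub (sq_mod_three h3) j
    have := two_pow_odd_mod_three l
    omega
  rcases Nat.eq_zero_or_pos l with rfl | hl
  · norm_num at h1 h2
    have hB' : (B : ℤ) % 8 = 1 ∨ (B : ℤ) % 8 = 7 := by omega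
    have hA3 := hA3 (by omega)
    subst hA3
    have nα : (⟨1, 1⟩ : ℤ√(-2)).norm = ((3 : ℕ) : ℤ) := by rw [norm_sq]; norm_num
    have nγ : (⟨(B : ℤ) ^ j, 1⟩ : ℤ√(-2)).norm = ((3 : ℕ) : ℤ) ^ (2 * e + 1) := by
      rw [norm_sq]; push_cast at h1 ⊢; rw [h1]; ring
    obtain ⟨hre, him⟩ := gen_one hA hA2 (by norm_num) (by norm_num) nα _ _ nγ (by
      rw [Zsqrtd.intCast_dvd]; norm_num)
    simp only at hre him
    have he : e ≠ 0 := by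
      rintro rfl
      have : (B : ℤ) ≤ B ^ (2 * j) := by exact_mod_cast Nat.le_self_pow (by omega) B
      norm_num at h1; omega
    refine fermat_one rfl (⟨1, 1⟩ : ℤ√(-2)) rfl rfl (q := 2 * e + 1) (by omega) ⟨e, rfl⟩
      (by rw [← him]; norm_num) ?_
    have hBj : (8 : ℤ) ∣ (B : ℤ) ^ j - 1 ∨ (8 : ℤ) ∣ (B : ℤ) ^ j + 1 := by
      rcases Nat.even_or_odd' j with ⟨e, he | he⟩
      · left; rw [he]; exact pow_even_sub hB8 e
      · have := pow_odd_sub hB8 e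
        rw [← he] at this; omega
    rcases abs_eq_abs.mp hre with h | h <;> rw [h] at hBj <;> omega
  · obtain ⟨l', rfl⟩ : ∃ l', l = l' + 1 := ⟨l - 1, by omega⟩
    have : (2 : ℤ) ^ (2 * (l' + 1) + 1) = 8 * 2 ^ (2 * l') := by ring
    have hA1 : (A : ℤ) % 8 = 1 := by omega
    have hB1 : (B : ℤ) % 8 = 1 := by omega
    have := hA3 (by omega)
    omega

theorem mo_odd {A B l e j i c : ℕ} (hA : A.Prime) (hB : B.Prime) (hA2 : 2 < A) (hB2 : 2 < B)
    (hl : 0 < l)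
    (h1 : (A : ℤ) ^ (2 * e + 1) = (B : ℤ) ^ (2 * j) + 2 ^ (2 * l))
    (h2 : (A : ℤ) ^ (2 * i) = (B : ℤ) ^ (2 * c + 1) + 2 ^ (2 * l)) : False := by
  have hBodd : Odd (B : ℤ) := by exact_mod_cast hB.odd_of_ne_two (by omega)
  have hAodd : Odd (A : ℤ) := by exact_mod_cast hA.odd_of_ne_two (by omega)
  have hA8 := Int.eight_dvd_sq_sub_one_of_odd hAodd
  have hB8 := Int.eight_dvd_sq_sub_one_of_odd hBodd
  have a1 := pow_odd_sub hA8 e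
  have b1 := pow_even_sub hB8 j
  have b2 := pow_odd_sub hB8 c
  have a2 := pow_even_sub hA8 i
  have hfac : ((A : ℤ) ^ i - 2 ^ l) * ((A : ℤ) ^ i + 2 ^ l) = (B : ℤ) ^ (2 * c + 1) := by
    rw [mul_comm 2 i, mul_comm 2 l, pow_mul, pow_mul] at h2; linarith
  have hBp : Prime (B : ℤ) := Nat.prime_iff_prime_int.mp hB
  have hBpos : (0 : ℤ) < (B : ℤ) ^ (2 * c + 1) := by positivity
  have hxpos : 0 < (A : ℤ) ^ i := by positivity
  have h2l : (0 : ℤ) < 2 ^ l := by positivity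
  have hsub : 0 < (A : ℤ) ^ i - 2 ^ l := by
    by_contra hc
    have := mul_nonpos_of_nonpos_of_nonneg (not_lt.mp hc) (by omega : 0 ≤ (A : ℤ) ^ i + 2 ^ l)
    omega
  obtain ⟨f, -, hf⟩ := dvd_prime_pow_abs hB (⟨_, hfac.symm⟩ : (A : ℤ) ^ i - 2 ^ l ∣ _)
  obtain ⟨g, -, hg⟩ := dvd_prime_pow_abs hB (⟨_, (mul_comm _ _ |>.trans hfac).symm⟩ : (A : ℤ) ^ i + 2 ^ l ∣ _)
  rw [abs_of_pos hsub] at hf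
  rw [abs_of_pos (by omega)] at hg
  have hf0 : f = 0 := by
    by_contra hf0
    have hg0 : g ≠ 0 := by
      rintro rfl
      rw [pow_zero] at hg; omega
    have d1 : (B : ℤ) ∣ (A : ℤ) ^ i - 2 ^ l := by rw [hf]; exact dvd_pow_self _ hf0
    have d2 : (B : ℤ) ∣ (A : ℤ) ^ i + 2 ^ l := by rw [hg]; exact dvd_pow_self _ hg0
    have d3 := dvd_sub d2 d1
    rw [show (A : ℤ) ^ i + 2 ^ l - ((A : ℤ) ^ i - 2 ^ l) = ((2 : ℕ) : ℤ) ^ (l+1) by push_cast; ring] at d3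
    exact not_dvd_of_dvd_sum hB Nat.prime_two (by omega) _ d3
  rw [hf0, pow_zero] at hf
  have hAi : (A : ℤ) ^ i = 2 ^ l + 1 := by linarith
  have hBc : (B : ℤ) ^ (2 * c + 1) = 2 ^ (l + 1) + 1 := by
    rw [← hfac, hAi]; ring
  rcases Nat.lt_or_ge l 2 with hl2 | hl2
  · have : l = 1 := by omega
    subst this
    have hA3 := prime_three_of hA (n := i) (by rw [hAi]; norm_num)
    subst hA3
    norm_num at h1 a1
    omega
  · obtain ⟨l', rfl⟩ : ∃ l', l = l' + 2 := ⟨l - 2, by omega⟩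
    have e1 : (2 : ℤ) ^ (2 * (l' + 2)) = 8 * (2 * 2 ^ (2 * l')) := by ring
    have hA1 : (A : ℤ) % 8 = 1 := by omega
    have hB1 : (B : ℤ) % 8 = 1 := by omega
    rcases Nat.even_or_odd' (l' + 2) with ⟨s, hs | hs⟩
    · have := prime_three_of hB (n := 2 * c + 1) (by
        rw [hBc, hs]; have := two_pow_odd_mod_three s; omega)
      omega
    · have := prime_three_of hA (n := i) (by
        rw [hAi, hs]; have := two_pow_odd_mod_three s; omega)
      omega

theorem B_mod {A B k e j g c : ℕ} (hA : A.Prime) (hB : B.Prime) (hA2 : 2 < A) (hB2 : 2 < B)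
    (h1 : (A : ℤ) ^ (2 * e + 1) = (B : ℤ) ^ (2 * j) + 2 ^ k)
    (h2 : (A : ℤ) ^ (2 * g + 1) = (B : ℤ) ^ (2 * c + 1) + 2 ^ k) :
    ∀ b ≤ k + 1, (2 : ℤ) ^ b ∣ B - 1 ∧ (2 : ℤ) ^ b ∣ A - 1 - 2 ^ k := by
  have hBodd : Odd (B : ℤ) := by exact_mod_cast hB.odd_of_ne_two (by omega)
  have hAodd : Odd (A : ℤ) := by exact_mod_cast hA.odd_of_ne_two (by omega)
  intro b
  induction b with
  | zero => intro _; simp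
  | succ b ih =>
    intro hb
    obtain ⟨i1, i2⟩ := ih (by omega)
    have i3 : (2 : ℤ) ^ b ∣ A - 1 := by
      have := dvd_add i2 (pow_dvd_pow (2 : ℤ) (by omega : b ≤ k))
      rwa [sub_add_cancel] at this
    have sq : ∀ x : ℤ, Odd x → (2 : ℤ) ^ b ∣ x - 1 → (2 : ℤ) ^ (b+1) ∣ x ^ 2 - 1 := by
      intro x hx hd
      rw [show x ^ 2 - 1 = (x - 1) * (x + 1) by ring, pow_succ]
      exact mul_dvd_mul hd (even_iff_two_dvd.mp hx.add_one)
    have sA := sq _ hAodd i3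
    have sB := sq _ hBodd i1
    have r1 := pow_odd_sub sA e
    have r2 := pow_odd_sub sA g
    have r3 := pow_even_sub sB j
    have r4 := pow_odd_sub sB c
    have r5 : (2 : ℤ) ^ (b+1) ∣ A - 1 - 2 ^ k := by
      rw [show (A : ℤ) - 1 - 2 ^ k = (B : ℤ) ^ (2 * j) - 1 - ((A : ℤ) ^ (2 * e + 1) - A) by
        rw [h1]; ring]
      exact dvd_sub r3 r1
    refine ⟨?_, r5⟩
    rw [show (B : ℤ) - 1 = ((A : ℤ) ^ (2 * g + 1) - A) - ((B : ℤ) ^ (2 * c + 1) - B)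
      + (A - 1 - 2 ^ k) by rw [h2]; ring]
    exact dvd_add (dvd_sub r2 r4) r5

theorem claimC {A B l e j : ℕ} (hA : A.Prime) (hB : B.Prime) (hA2 : 2 < A) (hB2 : 2 < B)
    (hA4 : A % 4 = 1) 
    (h1 : (A : ℤ) ^ (2 * e + 1) = (B : ℤ) ^ (2 * j) + 2 ^ (2 * l)) (hl : 0 < l) :
    ∃ a : ℤ, 0 ≤ a ∧ (A : ℤ) = a ^ 2 + 2 ^ (2 * l) := by
  have hBodd : Odd (B : ℤ) := by exact_mod_cast hB.odd_of_ne_two (by omega)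
  have hAodd : Odd (A : ℤ) := by exact_mod_cast hA.odd_of_ne_two (by omega)
  have key : ∀ a b : ℤ, Even b → (A : ℤ) = a ^ 2 + b ^ 2 → ∃ a : ℤ, 0 ≤ a ∧ (A : ℤ) = a ^ 2 + 2 ^ (2 * l) := by
    intro a b hb hab
    refine ⟨|a|, abs_nonneg _, ?_⟩
    rw [sq_abs, hab]; congr 1
    have haodd : Odd a := by
      by_contra hc
      rw [Int.not_odd_iff_even] at hc
      rw [hab] at hAodd
      exact Int.not_even_iff_odd.mpr hAodd
        ((hc.pow_of_ne_zero two_ne_zero).add (hb.pow_of_ne_zero two_ne_zero))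
    have hn : (⟨a, b⟩ : ℤ√(-1)).norm = (A : ℤ) ^ 1 := by rw [norm_sq, hab]; ring
    have hγ : (⟨(B : ℤ) ^ j, 2 ^ l⟩ : ℤ√(-1)).norm = (A : ℤ) ^ (2 * e + 1) := by
      rw [norm_sq, h1]; ring
    have hpγ : ¬ ((A : ℤ) : ℤ√(-1)) ∣ ⟨(B : ℤ) ^ j, 2 ^ l⟩ := by
      rw [Zsqrtd.intCast_dvd]
      rintro ⟨-, hc⟩
      simp only at hc
      exact not_dvd_of_dvd_sum hA Nat.prime_two (by omega) l (by exact_mod_cast hc)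
    have hp : ¬ ((A : ℤ) : ℤ√(-1)) ∣ ⟨a, b⟩ := by
      rintro ⟨z, hz⟩
      have := congrArg Zsqrtd.norm hz
      rw [Zsqrtd.norm_mul, hn, Zsqrtd.norm_intCast, pow_one] at this
      have hA0 : (A : ℤ) ≠ 0 := by omega
      have h1 : (A : ℤ) * z.norm = 1 := by
        apply mul_left_cancel₀ hA0; linarith
      have h2 := Int.le_of_dvd one_pos ⟨_, h1.symm⟩
      omega
    obtain ⟨q, u, hq, hu, hor⟩ := gen_raw hA hA2 (by norm_num) (by
      rw [dvd_neg]; intro h; have := Int.le_of_dvd one_pos h; omega) one_pos hn hp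
      (by intro h' β h3 h4; omega) _ _ hγ hpγ
    rw [one_mul] at hq
    subst hq
    obtain ⟨w, v, e1, e2⟩ := expandS (⟨a, b⟩ : ℤ√(-1)) (2 * e)
    simp only at e1 e2
    have hb2 : Even (-1 * b ^ 2 : ℤ) := (hb.pow_of_ne_zero two_ne_zero).mul_left _
    have hre : Odd ((⟨a, b⟩ : ℤ√(-1)) ^ (2 * e + 1)).re := by
      rw [e1]; exact haodd.pow.add_even (hb2.mul_right _)
    have hU : Odd (((2 * e : ℕ) : ℤ) + 1) := ⟨e, by push_cast; ring⟩
    have hU' := (hU.mul (haodd.pow (n := 2 * e))).add_even (hb2.mul_right v)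
    set U := (((2 * e : ℕ) : ℤ) + 1) * a ^ (2 * e) + -1 * b ^ 2 * v with hUdef
    have hime : Even ((⟨a, b⟩ : ℤ√(-1)) ^ (2 * e + 1)).im := by
      rw [e2]; exact hb.mul_right _
    have main : ∀ δ : ℤ√(-1), Odd δ.re → Even δ.im → (⟨(B : ℤ) ^ j, 2 ^ l⟩ : ℤ√(-1)) = u * δ →
        |δ.im| = 2 ^ l := by
      intro δ d1 d2 d3
      have r1 := congrArg Zsqrtd.re d3
      have r2 := congrArg Zsqrtd.im d3
      rw [Zsqrtd.re_mul] at r1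
      rw [Zsqrtd.im_mul] at r2
      simp only at r1 r2
      have hure : u.re ≠ 0 := by
        intro hc
        rw [hc, zero_mul, zero_add] at r1
        have : Odd ((B : ℤ) ^ j) := hBodd.pow
        rw [r1] at this
        exact Int.not_even_iff_odd.mpr this (d2.mul_left _)
      rw [norm_sq] at hu
      have hs := sq_pos_of_ne_zero hure
      have huim : u.im = 0 := by
        have : u.im ^ 2 ≤ 0 := by linarith
        exact pow_eq_zero_iff two_ne_zero |>.mp (le_antisymm this (sq_nonneg _))
      rw [huim] at hu r2
      have hu1 : |u.re| = 1 := by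
        rw [← sq_eq_sq₀ (abs_nonneg _) (by norm_num), sq_abs]; linarith
      rw [zero_mul, add_zero] at r2
      have := congrArg abs r2
      rw [abs_mul, hu1, one_mul, abs_of_pos (by positivity)] at this
      exact this.symm
    have him : |b * U| = 2 ^ l := by
      rw [← e2]
      rcases hor with h | h
      · exact main _ hre hime h
      · have := star_pow_abs (⟨a, b⟩ : ℤ√(-1)) (2 * e + 1)
        have h3 := main _ (by rw [this.1]; exact hre) (by rw [this.2]; exact hime.neg) h
        rwa [this.2, abs_neg] at h3
    have hU1 : |U| = 1 := by
      apply abs_one_of Nat.prime_two (t := l)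
      · push_cast; rw [← him, dvd_abs]; exact dvd_mul_left _ _
      · push_cast; rw [← even_iff_two_dvd]; exact Int.not_even_iff_odd.mpr hU'
    rw [abs_mul, hU1, mul_one] at him
    rw [← sq_abs b, him]; ring
  have := Fact.mk hA
  obtain ⟨a, b, hab⟩ := Nat.Prime.sq_add_sq (p := A) (by omega)
  have hab' : (A : ℤ) = (a : ℤ) ^ 2 + (b : ℤ) ^ 2 := by exact_mod_cast hab.symm
  rcases Int.even_or_odd (b : ℤ) with hb | hb
  · exact key _ _ hb hab'
  · apply key b a _ (by rw [hab']; ring)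
    by_contra hc
    rw [Int.not_even_iff_odd] at hc
    rw [hab'] at hAodd
    exact Int.not_even_iff_odd.mpr hAodd (hc.pow.add_odd hb.pow)


set_option maxHeartbeats 1000000 in
theorem me_one {A B k q j : ℕ} {x : ℤ} (hA : A.Prime) (hB : B.Prime) (hA2 : 2 < A) (hB2 : 2 < B)
    (hj : 0 < j) (hk : 2 ≤ k) (hq : Odd q) (hx : 0 ≤ x) (hAx : (A : ℤ) = x ^ 2 + 2 ^ k)
    (hBk : (2 : ℤ) ^ (k+1) ∣ B - 1)
    (h1 : (A : ℤ) ^ q = (B : ℤ) ^ (2 * j) + 2 ^ k) : q = 1 := by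
  have hBp : Prime (B : ℤ) := Nat.prime_iff_prime_int.mp hB
  have hB2k : ∀ n, ¬ (B : ℤ) ∣ 2 ^ n := by
    intro n
    exact_mod_cast not_dvd_of_dvd_sum hB Nat.prime_two (by omega) n
  have h2k : (4 : ℤ) ≤ 2 ^ k := by
    have := pow_le_pow_right₀ (by norm_num : (1 : ℤ) ≤ 2) hk; norm_num at this; exact this
  obtain ⟨d, hd⟩ : ∃ d : ℤ, d = -2 ^ k := ⟨_, rfl⟩
  have hBd : ¬ (B : ℤ) ∣ d := by rw [hd, dvd_neg]; exact hB2k k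
  have hAd : ¬ (A : ℤ) ∣ d := by
    rw [hd, dvd_neg]; exact_mod_cast not_dvd_of_dvd_sum hA Nat.prime_two (by omega) k
  have nα : (⟨x, 1⟩ : ℤ√d).norm = (A : ℤ) := by rw [norm_sq, hAx]; simp only [hd]; ring
  have nγ : (⟨(B : ℤ) ^ j, 1⟩ : ℤ√d).norm = (A : ℤ) ^ q := by
    rw [norm_sq, h1]; simp only [hd]; ring
  obtain ⟨hre, him⟩ := gen_one hA hA2 (by omega) hAd nα _ _ nγ (by
    rw [Zsqrtd.intCast_dvd]
    rintro ⟨-, h⟩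
    have := Int.le_of_dvd one_pos h
    omega)
  simp only [abs_one] at hre him
  obtain ⟨α, hα⟩ : ∃ α : ℤ√d, α = ⟨x, 1⟩ := ⟨_, rfl⟩
  have hαre : α.re = x := by rw [hα]
  have hαim : α.im = 1 := by rw [hα]
  rw [← hα] at hre him nα
  have hredvd : (α ^ q).re ∣ (B : ℤ) ^ j := by rw [← dvd_abs, hre, dvd_abs]
  have hxdvd : x ∣ (B : ℤ) ^ j := by
    rw [← hαre]; exact (re_dvd_re_pow α q hq).trans hredvd
  by_cases hBx : (B : ℤ) ∣ x
  · by_cases hBq : B ∣ q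
    · exfalso
      obtain ⟨r, hr⟩ := hBq
      have hrodd : Odd r := by
        rw [hr] at hq; exact (Nat.odd_mul.mp hq).2
      have hpow : α ^ q = (α ^ r) ^ B := by rw [hr, mul_comm, pow_mul]
      have hxr : x ∣ (α ^ r).re := by rw [← hαre]; exact re_dvd_re_pow α r hrodd
      have hNr : (α ^ r).norm = (A : ℤ) ^ r := by rw [norm_pow', nα]
      obtain ⟨β, hβ⟩ : ∃ β : ℤ√d, β = α ^ r := ⟨_, rfl⟩
      rw [← hβ] at hpow hxr hNr
      have him1 : |β.im| = 1 := by
        have h3 : β.im ∣ 1 := by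
          rw [him, dvd_abs, hpow]; exact im_dvd_im_pow _ _
        exact Int.isUnit_iff_abs_eq.mp (isUnit_of_dvd_one h3)
      have him2 : β.im ^ 2 = 1 := by rw [← sq_abs, him1]; norm_num
      obtain ⟨p, hp⟩ : Odd B := hB.odd_of_ne_two (by omega)
      obtain ⟨w, u, e1, -⟩ := expandO β p
      rw [← hp, him2, mul_one] at e1
      have hpB : (2 * (p : ℤ) + 1) = B := by rw [hp]; push_cast; rfl
      rw [hpB] at e1
      have hBβ : (B : ℤ) ∣ β.re := hBx.trans hxr
      have hV : |(B : ℤ) * d ^ p + β.re ^ 2 * w| ≤ B := by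
        apply abs_le_of hB (t := j)
        · refine dvd_trans ?_ hredvd
          rw [hpow, e1]; exact dvd_mul_left _ _
        · intro hc
          have h3 : (B : ℤ) ^ 2 ∣ β.re ^ 2 * w := (pow_dvd_pow_of_dvd hBβ 2).mul_right _
          have h4 := (dvd_add_left h3).mp hc
          rw [pow_two] at h4
          exact hBd (hBp.dvd_of_dvd_pow ((mul_dvd_mul_iff_left hBp.ne_zero).mp h4))
      have hβ0 : β.re ≠ 0 := by
        intro h3
        rw [hpow, e1, h3, zero_mul, zero_dvd_iff] at hredvd
        exact pow_ne_zero _ hBp.ne_zero hredvd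
      have hN : β.re ^ 2 + 2 ^ k = (A : ℤ) ^ r := by
        rw [← hNr, norm_sq, him2]; simp only [hd]; ring
      have hB3 : (3 : ℤ) ≤ B := by omega
      have hsq : (B : ℤ) ^ 2 ≤ β.re ^ 2 := by
        rw [← sq_abs β.re]
        exact pow_le_pow_left₀ (by positivity) (Int.le_of_dvd (abs_pos.mpr hβ0) ((dvd_abs _ _).mpr hBβ)) 2
      have hbig : ((B : ℤ) ^ j) ^ 2 ≤ B ^ 2 * β.re ^ 2 := by
        have h3 : (B : ℤ) ^ j ≤ B * |β.re| := by
          rw [← abs_of_pos (by positivity : (0 : ℤ) < (B : ℤ) ^ j), hre, hpow, e1, abs_mul, mul_comm]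
          exact mul_le_mul_of_nonneg_right hV (abs_nonneg _)
        calc ((B : ℤ) ^ j) ^ 2 ≤ (B * |β.re|) ^ 2 := pow_le_pow_left₀ (by positivity) h3 2
          _ = _ := by rw [mul_pow, sq_abs]
      have hE : ((A : ℤ) ^ r) ^ B ≤ B ^ 2 * (A : ℤ) ^ r := by
        rw [← pow_mul, mul_comm r B, ← hr, h1, ← hN, mul_comm 2 j, pow_mul]
        have h6 : (1 : ℤ) ≤ (B : ℤ) ^ 2 := one_le_pow₀ (by linarith)
        have h7 := le_mul_of_one_le_left (by linarith : (0 : ℤ) ≤ 2 ^ k) h6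
        rw [mul_add]; linarith
      set E := (A : ℤ) ^ r with hEd
      have hBE : (B : ℤ) ^ 2 < E := by linarith
      have hE1 : 1 ≤ E := by have := sq_nonneg (B : ℤ); linarith
      have h3 : E ^ 2 ≤ E ^ B := pow_le_pow_right₀ hE1 (by omega)
      have h5 := mul_lt_mul_of_pos_right hBE (by linarith : 0 < E)
      rw [← pow_two] at h5
      linarith
    · obtain ⟨p, hp⟩ := hq
      obtain ⟨w, u, e1, -⟩ := expandO α p
      rw [← hp, hαim, one_pow, mul_one, hαre] at e1
      have hpq : (2 * (p : ℤ) + 1) = q := by rw [hp]; push_cast; rfl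
      rw [hpq] at e1
      have hV : |(q : ℤ) * d ^ p + x ^ 2 * w| = 1 := by
        apply abs_one_of hB (t := j)
        · refine dvd_trans ?_ hredvd
          rw [e1]; exact dvd_mul_left _ _
        · intro hc
          have h3 : (B : ℤ) ∣ x ^ 2 * w := (dvd_pow hBx two_ne_zero).mul_right _
          rcases hBp.dvd_or_dvd ((dvd_add_left h3).mp hc) with h4 | h4
          · exact hBq (by exact_mod_cast h4)
          · exact hBd (hBp.dvd_of_dvd_pow h4)
      have hN := norm_inj (α := α ^ q) (β := α) (by rw [e1, abs_mul, hV, mul_one, hαre])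
        (by rw [← him, hαim, abs_one])
      rw [norm_pow', nα] at hN
      have : (A : ℤ) ^ q = (A : ℤ) ^ 1 := by rw [hN, pow_one]
      exact Nat.pow_right_injective (by omega : 2 ≤ A) (by exact_mod_cast this)
  · have hx1 : x = 1 := by
      have := abs_one_of hB hxdvd hBx
      rwa [abs_of_nonneg hx] at this
    subst hx1
    by_contra hne
    refine fermat_even hk hd α hαre hαim (q := q) ?_ hq him.symm ?_
    · obtain ⟨c, rfl⟩ := hq; omega
    · have hBj : (2 : ℤ) ^ (k+1) ∣ (B : ℤ) ^ j - 1 :=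
        hBk.trans (by simpa using sub_dvd_pow_sub_pow (B : ℤ) 1 j)
      rcases abs_eq_abs.mp hre with h | h
      · left; rwa [← h]
      · right
        rw [h, ← dvd_neg] at hBj
        rwa [show -(-(α ^ q).re - 1) = (α ^ q).re + 1 by ring] at hBj


theorem thue (M X Y : ℕ) (hM : 0 < M) (r : ℤ) (h : M < (X + 1) * (Y + 1)) :
    ∃ x y : ℤ, (x ≠ 0 ∨ y ≠ 0) ∧ |x| ≤ X ∧ |y| ≤ Y ∧ (M : ℤ) ∣ x - r * y := by
  have : NeZero M := ⟨hM.ne'⟩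
  let f : Fin (X+1) × Fin (Y+1) → ZMod M := fun p => (((p.1.val : ℤ) - r * (p.2.val : ℤ) : ℤ) : ZMod M)
  obtain ⟨p, p', hne, hf⟩ := Fintype.exists_ne_map_eq_of_card_lt f (by
    simpa [ZMod.card] using h)
  have h1 := p.1.isLt
  have h2 := p.2.isLt
  have h3 := p'.1.isLt
  have h4 := p'.2.isLt
  refine ⟨(p.1.val : ℤ) - p'.1.val, (p.2.val : ℤ) - p'.2.val, ?_, ?_, ?_, ?_⟩
  · by_contra hc
    push Not at hc
    apply hne
    ext
    · omega
    · omega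
  · rw [abs_le]; omega
  · rw [abs_le]; omega
  · have := (ZMod.intCast_eq_intCast_iff_dvd_sub _ _ M).mp hf
    rw [← dvd_neg] at this
    rw [show (p.1.val : ℤ) - p'.1.val - r * ((p.2.val : ℤ) - p'.2.val) =
      -((p'.1.val : ℤ) - r * (p'.2.val : ℤ) - ((p.1.val : ℤ) - r * (p.2.val : ℤ))) by ring]
    exact this

theorem thue_j {A B m j s : ℕ} {r : ℤ} (hA : A.Prime) (hs0 : 0 < s) (hsB : B < (s + 1) * (s + 1))
    (hB : 0 < B)
    (hKA : 2 * s + 2 < A) (hr : (A : ℤ) ^ m ∣ r ^ 2 + B) (hj : j ≤ m) :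
    ∃ x y c σ : ℤ, (A : ℤ) ^ j ∣ x - r * y ∧ x ^ 2 + B * y ^ 2 = c * (A : ℤ) ^ j ∧ 0 < c ∧
      c ≤ 2 * s + 2 ∧ c ∣ x - σ * y ∧ c ∣ σ ^ 2 + B ∧ 0 ≤ σ ∧ σ < c ∧
      ¬ ((A : ℤ) ∣ x ∧ (A : ℤ) ∣ y) := by
  have hAp : Prime (A : ℤ) := Nat.prime_iff_prime_int.mp hA
  have hApos : (0 : ℤ) < A := by have := hA.pos; omega
  have hBpos : (0 : ℤ) < B := by omega
  obtain ⟨M, hM⟩ : ∃ M, M = A ^ j := ⟨_, rfl⟩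
  have hMpos : 0 < M := by rw [hM]; exact pow_pos hA.pos _
  have hbox : M < (Nat.sqrt (M * s) + 1) * (Nat.sqrt (M / s) + 1) := by
    have e1 := Nat.lt_succ_sqrt (M * s)
    have e2 := Nat.lt_succ_sqrt (M / s)
    have e3 : M < (Nat.sqrt (M / s) + 1) * (Nat.sqrt (M / s) + 1) * s :=
      (Nat.div_lt_iff_lt_mul hs0).mp e2
    simp only [Nat.succ_eq_add_one] at e1
    set a := Nat.sqrt (M * s) + 1
    set b := Nat.sqrt (M / s) + 1
    have e4 : (M * M) * s < ((a * b) * (a * b)) * s := by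
      calc (M * M) * s = M * (M * s) := by ring
        _ < M * (a * a) := Nat.mul_lt_mul_of_pos_left e1 hMpos
        _ ≤ (b * b * s) * (a * a) := Nat.mul_le_mul_right _ e3.le
        _ = _ := by ring
    have e5 := lt_of_mul_lt_mul_right e4 (Nat.zero_le _)
    exact Nat.mul_self_lt_mul_self_iff.mp e5
  obtain ⟨x, y, hne, hx, hy, hd⟩ := thue M _ _ hMpos r hbox
  have hMz : (M : ℤ) = (A : ℤ) ^ j := by rw [hM]; push_cast; rfl
  have hMzpos : (0 : ℤ) < M := by omega
  have hx2 : x ^ 2 ≤ M * s := by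
    have e1 := Nat.sqrt_le' (M * s)
    have e2 : |x| ^ 2 ≤ ((Nat.sqrt (M * s) : ℕ) : ℤ) ^ 2 := pow_le_pow_left₀ (abs_nonneg _) hx 2
    rw [sq_abs] at e2
    exact e2.trans (by exact_mod_cast e1)
  have hy2 : s * y ^ 2 ≤ M := by
    have e1 := Nat.sqrt_le' (M / s)
    have e2 : |y| ^ 2 ≤ ((Nat.sqrt (M / s) : ℕ) : ℤ) ^ 2 := pow_le_pow_left₀ (abs_nonneg _) hy 2
    rw [sq_abs] at e2
    have e3 : s * (Nat.sqrt (M / s)) ^ 2 ≤ M :=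
      (Nat.mul_le_mul_left _ e1).trans (Nat.mul_div_le M s)
    calc (s : ℤ) * y ^ 2 ≤ s * ((Nat.sqrt (M / s) : ℕ) : ℤ) ^ 2 :=
          mul_le_mul_of_nonneg_left e2 (by omega)
      _ ≤ M := by exact_mod_cast e3
  have hbound : x ^ 2 + B * y ^ 2 ≤ (2 * s + 2) * M := by
    have e1 : (B : ℤ) ≤ (s + 2) * s := by
      have : (B : ℤ) < (s + 1) * (s + 1) := by exact_mod_cast hsB
      linarith
    have e2 : (B : ℤ) * y ^ 2 ≤ (s + 2) * M := by
      calc (B : ℤ) * y ^ 2 ≤ ((s + 2) * s) * y ^ 2 := mul_le_mul_of_nonneg_right e1 (sq_nonneg _)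
        _ = (s + 2) * (s * y ^ 2) := by ring
        _ ≤ (s + 2) * M := mul_le_mul_of_nonneg_left hy2 (by positivity)
    linarith
  have hpos : ∀ x y : ℤ, (x ≠ 0 ∨ y ≠ 0) → 0 < x ^ 2 + B * y ^ 2 := by
    intro x y h
    rcases h with h | h
    · have := sq_pos_of_ne_zero h; positivity
    · have := sq_pos_of_ne_zero h; positivity
  have hnd : ∀ (i : ℕ) (x y : ℤ), i ≤ m → (A : ℤ) ^ i ∣ x - r * y → (A : ℤ) ^ i ∣ x ^ 2 + B * y ^ 2 := by
    intro i x y hi h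
    have e1 : x ^ 2 + B * y ^ 2 = (x - r * y) * (x + r * y) + (r ^ 2 + B) * y ^ 2 := by ring
    rw [e1]
    exact dvd_add (h.mul_right _) (((pow_dvd_pow _ hi).trans hr).mul_right _)
  rw [hMz] at hd
  -- A does not divide both
  have hAxy : ¬ ((A : ℤ) ∣ x ∧ (A : ℤ) ∣ y) := by
    rintro ⟨⟨x', rfl⟩, ⟨y', rfl⟩⟩
    have hne' : x' ≠ 0 ∨ y' ≠ 0 := by
      rcases hne with h | h
      · left; exact right_ne_zero_of_mul h
      · right; exact right_ne_zero_of_mul h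
    have hp' := hpos _ _ hne'
    have key : (A : ℤ) ^ (j + 1) ≤ A ^ 2 * (x' ^ 2 + B * y' ^ 2) := by
      rcases Nat.eq_zero_or_pos j with h0 | h0
      · subst h0
        have e1 : (A : ℤ) ^ (0 + 1) ≤ A ^ 2 := pow_le_pow_right₀ (by omega) (by omega)
        have e2 : (A : ℤ) ^ 2 * 1 ≤ A ^ 2 * (x' ^ 2 + B * y' ^ 2) :=
          mul_le_mul_of_nonneg_left (by omega) (by positivity)
        linarith
      · obtain ⟨i, rfl⟩ : ∃ i, j = i + 1 := ⟨j - 1, by omega⟩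
        have e1 : (A : ℤ) ^ i ∣ x' - r * y' := by
          rw [show (A : ℤ) * x' - r * (A * y') = A * (x' - r * y') by ring, pow_succ, mul_comm] at hd
          exact (mul_dvd_mul_iff_left hApos.ne').mp hd
        have e2 := Int.le_of_dvd hp' (hnd i _ _ (by omega) e1)
        calc (A : ℤ) ^ (i + 1 + 1) = A ^ 2 * A ^ i := by ring
          _ ≤ _ := mul_le_mul_of_nonneg_left e2 (by positivity)
    have e3 : (A : ℤ) ^ (j + 1) ≤ (2 * s + 2) * (A : ℤ) ^ j := by
      rw [← hMz]; rw [hMz] at hbound ⊢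
      calc _ ≤ _ := key
        _ = (A * x') ^ 2 + B * (A * y') ^ 2 := by ring
        _ ≤ _ := hbound
    rw [pow_succ, mul_comm] at e3
    have := le_of_mul_le_mul_right e3 (by positivity)
    omega
  -- divide by the gcd
  have hg0 : 0 < Int.gcd x y := by
    rw [Int.gcd_pos_iff]; exact hne
  obtain ⟨g, x1, y1, hgpos, hcop, hx1, hy1⟩ := Int.exists_gcd_one' hg0
  have hgA : ¬ (A : ℤ) ∣ g := by
    intro h
    exact hAxy ⟨by rw [hx1]; exact h.mul_left _, by rw [hy1]; exact h.mul_left _⟩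
  have hne1 : x1 ≠ 0 ∨ y1 ≠ 0 := by
    by_contra hc
    push Not at hc
    rw [hc.1, zero_mul] at hx1
    rw [hc.2, zero_mul] at hy1
    rcases hne with h | h
    · exact h hx1
    · exact h hy1
  have hd1 : (A : ℤ) ^ j ∣ x1 - r * y1 := by
    rw [hx1, hy1, show x1 * (g : ℤ) - r * (y1 * g) = g * (x1 - r * y1) by ring] at hd
    exact (((Prime.coprime_iff_not_dvd hAp).mpr hgA).pow_left).dvd_of_dvd_mul_left hd
  obtain ⟨c, hc⟩ := hnd j _ _ hj hd1
  have hp1 := hpos _ _ hne1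
  have hAj : (0 : ℤ) < (A : ℤ) ^ j := by positivity
  have hcpos : 0 < c := by
    rw [hc] at hp1
    exact (mul_pos_iff_of_pos_left hAj).mp hp1
  have hcle : c ≤ 2 * s + 2 := by
    have e1 : x1 ^ 2 + B * y1 ^ 2 ≤ x ^ 2 + B * y ^ 2 := by
      rw [hx1, hy1, show (x1 * (g : ℤ)) ^ 2 + B * (y1 * g) ^ 2 = (x1 ^ 2 + B * y1 ^ 2) * g ^ 2 by ring]
      apply le_mul_of_one_le_right hp1.le
      exact one_le_pow₀ (by omega)
    rw [hMz] at hbound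
    have e2 : (A : ℤ) ^ j * c ≤ (A : ℤ) ^ j * (2 * s + 2) := by
      rw [← hc]; linarith
    exact le_of_mul_le_mul_left e2 hAj
  have hcop' : IsCoprime x1 y1 := Int.isCoprime_iff_gcd_eq_one.mpr hcop
  have hcy : IsCoprime c y1 := by
    have e1 : IsCoprime (x1 ^ 2 + y1 * (B * y1)) y1 := (hcop'.pow_left).add_mul_left_left _
    rw [show x1 ^ 2 + y1 * (B * y1) = (A : ℤ) ^ j * c by rw [← hc]; ring] at e1
    exact e1.of_mul_left_right
  obtain ⟨a, b, hab⟩ := hcy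
  refine ⟨x1, y1, c, (x1 * b) % c, hd1, by rw [hc]; ring, hcpos, hcle, ?_, ?_,
    Int.emod_nonneg _ hcpos.ne', Int.emod_lt_of_pos _ hcpos, ?_⟩
  · have e1 : x1 * b % c = x1 * b - c * (x1 * b / c) := by
      have := Int.emod_add_mul_ediv (x1 * b) c; linarith
    rw [e1]
    exact ⟨x1 * a + (x1 * b / c) * y1, by linear_combination (-x1) * hab⟩
  · have e1 : x1 * b % c = x1 * b - c * (x1 * b / c) := by
      have := Int.emod_add_mul_ediv (x1 * b) c; linarith
    rw [e1]
    have hcy' : IsCoprime c (y1 ^ 2) := IsCoprime.pow_right ⟨a, b, hab⟩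
    refine hcy'.dvd_of_dvd_mul_right ?_
    set t := x1 * b / c
    have e2 : c ∣ (x1 * b - c * t) * y1 - x1 := ⟨-(x1 * a + t * y1), by linear_combination x1 * hab⟩
    have e3 : ((x1 * b - c * t) ^ 2 + B) * y1 ^ 2 =
        ((x1 * b - c * t) * y1 - x1) * ((x1 * b - c * t) * y1 + x1) + (x1 ^ 2 + B * y1 ^ 2) := by ring
    rw [e3, hc]
    exact dvd_add (e2.mul_right _) (dvd_mul_left _ _)
  · rintro ⟨e1, e2⟩
    have := hcop'.isUnit_of_dvd' e1 e2
    exact hAp.not_isUnit this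

theorem pigeon {A B m s : ℕ} {r : ℤ} (hA : A.Prime) (hs0 : 0 < s) (hsB : B < (s + 1) * (s + 1))
    (hB : 0 < B)
    (hKA : 2 * s + 2 < A) (hr : (A : ℤ) ^ m ∣ r ^ 2 + B) (hm : (2 * s + 3) * (2 * s + 3) < m) :
    ∃ h, 0 < h ∧ h < m ∧ ∃ γ : ℤ√(-(B : ℤ)), γ.norm = (A : ℤ) ^ h ∧
      ¬ ((A : ℤ) : ℤ√(-(B : ℤ))) ∣ γ := by
  have hAp : Prime (A : ℤ) := Nat.prime_iff_prime_int.mp hA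
  have hex := fun j : Fin m => thue_j (r := r) (j := j.val) hA hs0 hsB hB hKA hr j.isLt.le
  choose x y c σ h1 h2 h3 h4 h5 h6 h7 h8 h9 using hex
  let f : Fin m → Fin (2 * s + 3) × Fin (2 * s + 3) := fun j =>
    (⟨(c j).toNat, by have := h3 j; have := h4 j; omega⟩,
     ⟨(σ j).toNat, by have := h3 j; have := h4 j; have := h8 j; have := h7 j; omega⟩)
  obtain ⟨i, j, hne, hf⟩ := Fintype.exists_ne_map_eq_of_card_lt f (by simpa using hm)
  wlog hij : i.val < j.val generalizing i j with W
  · exact W j i hne.symm hf.symm (by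
      have : i.val ≠ j.val := fun h => hne (Fin.ext h)
      omega)
  have hf1 := congrArg (fun p => p.1.val) hf
  have hf2 := congrArg (fun p => p.2.val) hf
  simp only [f] at hf1 hf2
  have hcc : c i = c j := by have := h3 i; have := h3 j; omega
  have hσσ : σ i = σ j := by have := h7 i; have := h7 j; omega
  obtain ⟨n, hn⟩ : ∃ n, j.val = i.val + n := ⟨j.val - i.val, by omega⟩
  refine ⟨n, by omega, by have := j.isLt; omega, ?_⟩
  have a1 := h1 i
  have a2 := h1 j
  have b1 := h2 i
  have b2 := h2 j
  have c1 := h5 i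
  have c2 := h5 j
  have d1 := h6 j
  rw [hcc] at c1 b1
  rw [hσσ] at c1
  have hcpos := h3 j
  have hcle := h4 j
  have hndv := h9 j
  have hrr : (A : ℤ) ^ i.val ∣ r ^ 2 + B := (pow_dvd_pow _ i.isLt.le).trans hr
  have a2' : (A : ℤ) ^ i.val ∣ x j - r * y j := (pow_dvd_pow _ hij.le).trans a2
  rw [hn, pow_add] at b2
  generalize x i = x₁ at *
  generalize y i = y₁ at *
  generalize x j = x₂ at *
  generalize y j = y₂ at *
  generalize c j = C at *
  generalize σ j = S at *
  generalize hP : (A : ℤ) ^ i.val = P at *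
  have hPpos : 0 < P := by rw [← hP]; have := hA.pos; positivity
  have comb : ∀ M r : ℤ, M ∣ x₁ - r * y₁ → M ∣ x₂ - r * y₂ → M ∣ r ^ 2 + B →
      M ∣ x₁ * x₂ + B * y₁ * y₂ ∧ M ∣ x₁ * y₂ - x₂ * y₁ := by
    intro M r e1 e2 e3
    constructor
    · rw [show x₁ * x₂ + B * y₁ * y₂ = (x₁ - r * y₁) * x₂ + r * y₁ * (x₂ - r * y₂) + (r ^ 2 + B) * (y₁ * y₂) by ring]
      exact dvd_add (dvd_add (e1.mul_right _) (e2.mul_left _)) (e3.mul_right _)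
    · rw [show x₁ * y₂ - x₂ * y₁ = (x₁ - r * y₁) * y₂ - (x₂ - r * y₂) * y₁ by ring]
      exact dvd_sub (e1.mul_right _) (e2.mul_right _)
  obtain ⟨u1, u2⟩ := comb _ _ a1 a2' hrr
  obtain ⟨v1, v2⟩ := comb _ _ c1 c2 d1
  have hcop : IsCoprime C P := by
    rw [← hP]
    apply IsCoprime.pow_right
    apply IsCoprime.symm
    rw [Prime.coprime_iff_not_dvd hAp]
    intro h
    have := Int.le_of_dvd hcpos h
    omega
  obtain ⟨X, hX⟩ := hcop.mul_dvd v1 u1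
  obtain ⟨Y, hY⟩ := hcop.mul_dvd v2 u2
  have hCP : C * P ≠ 0 := (mul_pos hcpos hPpos).ne'
  refine ⟨⟨X, Y⟩, ?_, ?_⟩
  · rw [norm_sq]
    apply mul_left_cancel₀ (pow_ne_zero 2 hCP)
    have : (x₁ * x₂ + B * y₁ * y₂) ^ 2 + B * (x₁ * y₂ - x₂ * y₁) ^ 2 =
      (x₁ ^ 2 + B * y₁ ^ 2) * (x₂ ^ 2 + B * y₂ ^ 2) := by ring
    rw [hX, hY, b1, b2] at this
    simp only
    linear_combination this
  · rw [Zsqrtd.intCast_dvd]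
    rintro ⟨e1, e2⟩
    simp only at e1 e2
    apply hndv
    have f1 : x₂ = x₁ * X - B * y₁ * Y := by
      apply mul_left_cancel₀ hCP
      linear_combination x₁ * hX - B * y₁ * hY - x₂ * b1
    have f2 : y₂ = x₁ * Y + y₁ * X := by
      apply mul_left_cancel₀ hCP
      linear_combination x₁ * hY + y₁ * hX - y₂ * b1
    constructor
    · rw [f1]; exact dvd_sub (e1.mul_left _) (e2.mul_left _)
    · rw [f2]; exact dvd_add (e2.mul_left _) (e1.mul_left _)


theorem size_m {B Q K : ℝ} {m : ℕ} (hB : 17 ≤ B) (hK : 0 < K) (hKB : 4 * K ≤ B) (hQ : B ^ 2 ≤ Q)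
    (h : B * Q ^ m ≤ (Q + K) ^ m) : 8 * B < m := by
  by_contra hc
  push Not at hc
  have hQpos : 0 < Q := by nlinarith
  have e1 : (Q + K) ^ m = Q ^ m * (K / Q + 1) ^ m := by
    rw [← mul_pow]; congr 1; field_simp; ring
  have e2 : (K / Q + 1) ^ m ≤ Real.exp 2 := by
    calc (K / Q + 1) ^ m ≤ (Real.exp (K / Q)) ^ m :=
          pow_le_pow_left₀ (by positivity) (Real.add_one_le_exp _) m
      _ = Real.exp (m * (K / Q)) := by rw [← Real.exp_nat_mul]
      _ ≤ Real.exp 2 := by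
        apply Real.exp_le_exp.mpr
        rw [← mul_div_assoc, div_le_iff₀ hQpos]
        calc (m : ℝ) * K ≤ 8 * B * K := mul_le_mul_of_nonneg_right hc hK.le
          _ ≤ 2 * B ^ 2 := by nlinarith
          _ ≤ 2 * Q := by linarith
  have e3 : Real.exp 2 < 9 := by
    have h1 := Real.exp_one_lt_d9
    have h0 := Real.exp_pos 1
    rw [show (2 : ℝ) = 1 + 1 by norm_num, Real.exp_add]
    nlinarith
  have hQm : 0 < Q ^ m := by positivity
  rw [e1, mul_comm] at h
  have := le_of_mul_le_mul_left h hQm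
  linarith

set_option maxHeartbeats 1000000 in
theorem final_case {A B l j m t : ℕ} (hA : A.Prime) (hB : B.Prime) (hA2 : 2 < A) (hB2 : 2 < B)
    (hAB : A ≠ B) (hj : 0 < j) (hl : 0 < l) (hm : Odd m)
    (hBk : (2 : ℤ) ^ (2 * l + 1) ∣ B - 1)
    (h1 : (A : ℤ) = (B : ℤ) ^ (2 * j) + 2 ^ (2 * l))
    (h2 : (A : ℤ) ^ m = (B : ℤ) ^ (2 * t + 1) + 2 ^ (2 * l)) : False := by
  have hAp : Prime (A : ℤ) := Nat.prime_iff_prime_int.mp hA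
  have hBp : Prime (B : ℤ) := Nat.prime_iff_prime_int.mp hB
  have hBodd : Odd (B : ℤ) := by exact_mod_cast hB.odd_of_ne_two (by omega)
  have hAodd : Odd (A : ℤ) := by exact_mod_cast hA.odd_of_ne_two (by omega)
  have hK4 : (4 : ℤ) ≤ 2 ^ (2 * l) := by
    have := pow_le_pow_right₀ (by norm_num : (1 : ℤ) ≤ 2) (by omega : 2 ≤ 2 * l)
    norm_num at this; exact this
  have hBlow : 4 * 2 ^ (2 * l) + 1 ≤ (B : ℤ) := by
    obtain ⟨c, hc⟩ := hBk
    have hp : (2 : ℤ) ^ (2 * l + 1) = 2 * 2 ^ (2 * l) := by ring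
    have hc0 : 0 < c := by
      by_contra h
      have := mul_nonpos_of_nonneg_of_nonpos (by positivity : (0 : ℤ) ≤ 2 ^ (2 * l + 1)) (not_lt.mp h)
      omega
    have hc1 : c ≠ 1 := by
      rintro rfl
      have := two_pow_odd_mod_three l
      have := prime_three_of hB (n := 1) (by rw [pow_one]; omega)
      omega
    have : (2 : ℤ) ^ (2 * l + 1) * 2 ≤ 2 ^ (2 * l + 1) * c :=
      mul_le_mul_of_nonneg_left (by omega) (by positivity)
    omega
  have hB17 : 17 ≤ B := by omega
  have hm0 : m ≠ 0 := by rintro rfl; simp at hm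
  have hQB : (B : ℤ) ^ 2 ≤ (B : ℤ) ^ (2 * j) := pow_le_pow_right₀ (by omega) (by omega)
  -- m is large
  have hmbig : 8 * B < m := by
    have e1 : (B : ℤ) ^ (2 * j * m) ≤ (B : ℤ) ^ (2 * t + 1) := by
      have f1 : ((B : ℤ) ^ (2 * j)) ^ m + (2 ^ (2 * l)) ^ m ≤ ((B : ℤ) ^ (2 * j) + 2 ^ (2 * l)) ^ m :=
        pow_add_pow_le (by positivity) (by positivity) hm0
      have f2 : (2 : ℤ) ^ (2 * l) ≤ (2 ^ (2 * l)) ^ m := le_self_pow₀ (by omega) hm0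
      rw [← h1, h2] at f1
      rw [pow_mul]; linarith
    have e2 : 2 * j * m ≤ 2 * t + 1 :=
      (pow_le_pow_iff_right₀ (by omega : (1 : ℤ) < B)).mp e1
    have e3 : 2 * j * m + 1 ≤ 2 * t + 1 := by
      have : 2 * j * m = 2 * (j * m) := by ring
      omega
    have e4 : (B : ℤ) * ((B : ℤ) ^ (2 * j)) ^ m ≤ ((B : ℤ) ^ (2 * j) + 2 ^ (2 * l)) ^ m := by
      rw [← h1, h2, ← pow_mul]
      have : (B : ℤ) ^ (2 * j * m + 1) ≤ (B : ℤ) ^ (2 * t + 1) := pow_le_pow_right₀ (by omega) e3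
      rw [pow_succ, mul_comm] at this
      linarith
    have e5 := size_m (B := (B : ℝ)) (Q := (B : ℝ) ^ (2 * j)) (K := 2 ^ (2 * l)) (m := m)
      (by exact_mod_cast hB17) (by positivity)
      (by have : 4 * 2 ^ (2 * l) ≤ (B : ℤ) := by omega
          exact_mod_cast this)
      (by exact_mod_cast hQB) (by exact_mod_cast e4)
    exact_mod_cast e5
  -- r
  have hr : ∃ r : ℤ, (A : ℤ) ^ m ∣ r ^ 2 + B := by
    have hcop : IsCoprime ((A : ℤ) ^ m) ((B : ℤ) ^ t) := by
      apply IsCoprime.pow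
      rw [Prime.coprime_iff_not_dvd hAp]
      simpa using not_dvd_of_dvd_sum hA hB hAB 1
    obtain ⟨a, b, hab⟩ := hcop
    have hcop2 : IsCoprime ((A : ℤ) ^ m) (((B : ℤ) ^ t) ^ 2) := IsCoprime.pow_right ⟨a, b, hab⟩
    refine ⟨2 ^ l * b, hcop2.dvd_of_dvd_mul_left ?_⟩
    have e1 : ((B : ℤ) ^ t) ^ 2 * ((2 ^ l * b) ^ 2 + B) =
        (2 ^ l) ^ 2 * (b * (B : ℤ) ^ t) ^ 2 + (B : ℤ) ^ (2 * t + 1) := by ring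
    have e2 : b * (B : ℤ) ^ t = 1 - a * (A : ℤ) ^ m := by linarith
    have e3 : (B : ℤ) ^ (2 * t + 1) = (A : ℤ) ^ m - (2 ^ l) ^ 2 := by rw [h2]; ring
    rw [e1, e2, e3]
    exact ⟨1 - 2 * a * (2 ^ l) ^ 2 + (2 ^ l) ^ 2 * a ^ 2 * (A : ℤ) ^ m, by ring⟩
  obtain ⟨r, hr⟩ := hr
  have hs4 : 4 ≤ Nat.sqrt B := Nat.le_sqrt.mpr (by omega)
  have hsB := Nat.sqrt_le B
  have hsB' : B < (Nat.sqrt B + 1) * (Nat.sqrt B + 1) := Nat.lt_succ_sqrt B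
  have hsle : Nat.sqrt B ≤ B := Nat.sqrt_le_self B
  have hBA : 2 * B + 2 < A := by
    have : 2 * (B : ℤ) + 2 < A := by rw [h1]; nlinarith
    omega
  obtain ⟨h₀, hh₀, hh₀m, γ₀, hγ₀, hpγ₀⟩ := pigeon (s := Nat.sqrt B) hA (by omega) hsB' (by omega)
    (by omega) hr (by nlinarith)
  have hAd : ¬ (A : ℤ) ∣ -(B : ℤ) := by
    rw [dvd_neg]; simpa using not_dvd_of_dvd_sum hA hB hAB 1
  obtain ⟨h, α, hh, hhh₀, hαn, hgen⟩ := gen hA hA2 (by omega) hAd hh₀ hγ₀ hpγ₀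
  have nγ : (⟨2 ^ l, (B : ℤ) ^ t⟩ : ℤ√(-(B : ℤ))).norm = (A : ℤ) ^ m := by
    rw [norm_sq, h2]; simp only; ring
  obtain ⟨q, hq, hre, him⟩ := hgen _ _ nγ (by
    rw [Zsqrtd.intCast_dvd]
    rintro ⟨hc, -⟩
    simp only at hc
    exact not_dvd_of_dvd_sum hA Nat.prime_two (by omega) l (by exact_mod_cast hc))
  simp only at hre him
  have hqodd : Odd q := by rw [hq] at hm; exact (Nat.odd_mul.mp hm).2
  have hq1 : q ≠ 1 := by rintro rfl; omega
  have himdvd : (α ^ q).im ∣ (B : ℤ) ^ t := by rw [← dvd_abs, him, dvd_abs]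
  have hredvd : (α ^ q).re ∣ 2 ^ l := by rw [← dvd_abs, hre, dvd_abs]
  have hBt : (0 : ℤ) < (B : ℤ) ^ t := by positivity
  have hyodd : Odd α.im := by
    have e1 : α.im ∣ (B : ℤ) ^ t := (im_dvd_im_pow α q).trans himdvd
    obtain ⟨c, hc⟩ := e1
    have : Odd ((B : ℤ) ^ t) := hBodd.pow
    rw [hc] at this
    exact (Int.odd_mul.mp this).1
  have hxeven : Even α.re := by
    by_contra hc
    rw [Int.not_even_iff_odd] at hc
    have e1 : Odd ((A : ℤ) ^ h) := hAodd.pow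
    rw [← hαn, norm_sq] at e1
    have e2 : Even (α.re ^ 2 - -(B : ℤ) * α.im ^ 2) := hc.pow.sub_odd (hBodd.neg.mul hyodd.pow)
    exact Int.not_even_iff_odd.mpr e1 e2
  have hxq : |(α ^ q).re| = |α.re| := by
    obtain ⟨p, hp⟩ := hqodd
    obtain ⟨w, u, e1, -⟩ := expandO α p
    rw [← hp] at e1
    have hV : Odd ((2 * (p : ℤ) + 1) * (-(B : ℤ) * α.im ^ 2) ^ p + α.re ^ 2 * w) := by
      apply Odd.add_even
      · exact Odd.mul ⟨p, rfl⟩ (hBodd.neg.mul hyodd.pow).pow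
      · exact (hxeven.pow_of_ne_zero two_ne_zero).mul_right _
    have hV1 := abs_one_of Nat.prime_two (t := l)
      (show ((2 * (p : ℤ) + 1) * (-(B : ℤ) * α.im ^ 2) ^ p + α.re ^ 2 * w) ∣ _ by
        refine dvd_trans ?_ (by exact_mod_cast hredvd)
        rw [e1]; exact dvd_mul_left _ _)
      (by push_cast; rw [← even_iff_two_dvd]; exact Int.not_even_iff_odd.mpr hV)
    rw [e1, abs_mul, hV1, mul_one]
  have hx2 : |α.re| = 2 ^ l := by
    rw [← hxq, ← hre, abs_of_pos (by positivity)]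
  have hdB : (B : ℤ) ∣ -(B : ℤ) := (dvd_refl _).neg_right
  have hB2k : ¬ (B : ℤ) ∣ 2 ^ l := by
    exact_mod_cast not_dvd_of_dvd_sum hB Nat.prime_two (by omega) l
  by_cases hBq : B ∣ q
  · obtain ⟨r', hr'⟩ := hBq
    have hr'odd : Odd r' := by rw [hr'] at hqodd; exact (Nat.odd_mul.mp hqodd).2
    have hpow : α ^ q = (α ^ r') ^ B := by rw [hr', mul_comm, pow_mul]
    have hxr : α.re ∣ (α ^ r').re := re_dvd_re_pow α r' hr'odd
    obtain ⟨β, hβ⟩ : ∃ β, β = α ^ r' := ⟨_, rfl⟩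
    rw [← hβ] at hpow hxr
    have hβre : |β.re| = 2 ^ l := by
      have e1 : β.re ∣ (α ^ q).re := by
        rw [hpow]; exact re_dvd_re_pow β B (by exact_mod_cast hBodd)
      have e2 : |β.re| ∣ |(α ^ q).re| := by rwa [abs_dvd, dvd_abs]
      have e3 : |α.re| ∣ |β.re| := by rwa [abs_dvd, dvd_abs]
      rw [hxq, hx2] at e2
      rw [hx2] at e3
      exact Int.dvd_antisymm (abs_nonneg _) (by positivity) e2 e3
    have hBβ : ¬ (B : ℤ) ∣ β.re := by rw [← dvd_abs, hβre]; exact hB2k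
    obtain ⟨u, hu, hu2⟩ := lteIm hB (by omega) hdB hBβ
    have hule : |u| ≤ B := abs_le_of hB (t := t) (by
      refine dvd_trans ?_ himdvd
      rw [hpow, hu]; exact dvd_mul_left _ _) hu2
    have hNE : β.norm ^ B = (α ^ q).norm := by rw [hpow, norm_pow']
    have hEv : β.norm = β.re ^ 2 + B * β.im ^ 2 := by rw [norm_sq]; ring
    have hqv : (α ^ q).norm = β.re ^ 2 + B * (β.im ^ 2 * u ^ 2) := by
      rw [norm_sq, ← sq_abs (α ^ q).re, hxq, hx2, ← hβre, sq_abs, hpow, hu]; ring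
    have hu2le : u ^ 2 ≤ (B : ℤ) ^ 2 := by
      rw [← sq_abs u]; exact pow_le_pow_left₀ (abs_nonneg _) hule 2
    have him0 : β.im ≠ 0 := by
      intro hc
      rw [hpow, hu, hc, zero_mul, zero_dvd_iff] at himdvd
      omega
    have him1 : 1 ≤ β.im ^ 2 := by have := sq_pos_of_ne_zero him0; omega
    have hre0 := sq_nonneg β.re
    have hBpos : (0 : ℤ) < B := by omega
    have hEB : (B : ℤ) ≤ β.norm := by
      rw [hEv]
      have := le_mul_of_one_le_right hBpos.le him1
      linarith
    have hbd : β.norm ^ B ≤ (B : ℤ) ^ 2 * β.norm := by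
      rw [hNE, hqv, hEv]
      have f1 : (B : ℤ) * (β.im ^ 2 * u ^ 2) ≤ B * (β.im ^ 2 * (B : ℤ) ^ 2) :=
        mul_le_mul_of_nonneg_left (mul_le_mul_of_nonneg_left hu2le (sq_nonneg _)) hBpos.le
      have f2 : β.re ^ 2 ≤ (B : ℤ) ^ 2 * β.re ^ 2 :=
        le_mul_of_one_le_left hre0 (one_le_pow₀ (by omega))
      linarith
    set E := β.norm
    have hEpos : 0 < E := by omega
    have g1 : E ^ 4 ≤ E ^ B := pow_le_pow_right₀ (by omega) (by omega)
    have g2 : (B : ℤ) ^ 3 ≤ E ^ 3 := pow_le_pow_left₀ hBpos.le hEB 3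
    have g3 : (B : ℤ) ^ 3 * E ≤ B ^ 2 * E := by
      calc (B : ℤ) ^ 3 * E ≤ E ^ 3 * E := mul_le_mul_of_nonneg_right g2 hEpos.le
        _ = E ^ 4 := by ring
        _ ≤ _ := g1.trans hbd
    have g4 := le_of_mul_le_mul_right g3 hEpos
    have g5 : (B : ℤ) ^ 2 < B ^ 3 := pow_lt_pow_right₀ (by omega) (by norm_num)
    omega
  · have hBx : ¬ (B : ℤ) ∣ α.re := by rw [← dvd_abs, hx2]; exact hB2k
    obtain ⟨u, hu, hu2⟩ := lteImS hB hdB hBx hBq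
    have hu1 : |u| = 1 := abs_one_of hB (t := t) (by
      refine dvd_trans ?_ himdvd
      rw [hu]; exact dvd_mul_left _ _) hu2
    have hN := norm_inj (α := α ^ q) (β := α) hxq (by rw [hu, abs_mul, hu1, mul_one])
    rw [norm_pow', hαn, ← pow_mul] at hN
    have : h * q = h := Nat.pow_right_injective (by omega : 2 ≤ A) (by exact_mod_cast hN)
    exact hq1 (Nat.eq_of_mul_eq_mul_left hh (by omega))

theorem part2 {A B k me j mo c : ℕ} (hA : A.Prime) (hB : B.Prime) (hA2 : 2 < A) (hB2 : 2 < B)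
    (hAB : A ≠ B) (hk : 0 < k) (hj : 0 < j)
    (h1 : (A : ℤ) ^ me = (B : ℤ) ^ (2 * j) + 2 ^ k)
    (h2 : (A : ℤ) ^ mo = (B : ℤ) ^ (2 * c + 1) + 2 ^ k) : False := by
  rcases Nat.even_or_odd' me with ⟨e, rfl | rfl⟩
  · exact me_odd hA hB hA2 hB2 hj h1 h2
  rcases Nat.even_or_odd' k with ⟨l, rfl | rfl⟩
  swap
  · exact k_odd_case hA hB hA2 hB2 hj h1 h2
  have hl : 0 < l := by omega
  rcases Nat.even_or_odd' mo with ⟨g, rfl | rfl⟩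
  · exact mo_odd hA hB hA2 hB2 hl h1 h2
  have hmod := B_mod hA hB hA2 hB2 h1 h2
  have hBk := (hmod (2 * l + 1) le_rfl).1
  have hA4 : A % 4 = 1 := by
    have e1 := (hmod 2 (by omega)).2
    have e2 := pow_dvd_pow (2 : ℤ) (by omega : 2 ≤ 2 * l)
    norm_num at e1 e2
    omega
  obtain ⟨a, ha, hAa⟩ := claimC hA hB hA2 hB2 hA4 h1 hl
  have hme := me_one hA hB hA2 hB2 hj (by omega) ⟨e, rfl⟩ ha hAa hBk h1
  rw [hme, pow_one] at h1
  exact final_case hA hB hA2 hB2 hAB hj hl ⟨g, rfl⟩ hBk h1 h2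


theorem stmt_11_n {A B k m₁ n₁ m₂ n₂ : ℕ} (hA : Nat.Prime A) (hB : Nat.Prime B)
    (hAodd : 2 < A) (hBodd : 2 < B) (hAB : A ≠ B) (hk : 0 < k)
    (hm₁ : 0 < m₁) (hn₁ : 0 < n₁) (hle : n₁ ≤ n₂)
    (h1 : (A : ℤ) ^ m₁ = (B : ℤ) ^ n₁ + 2 ^ k)
    (h2 : (A : ℤ) ^ m₂ = (B : ℤ) ^ n₂ + 2 ^ k) : n₁ = n₂ := by
  rcases Nat.even_or_odd' n₁ with ⟨a, ha | ha⟩ <;> rcases Nat.even_or_odd' n₂ with ⟨b, hb | hb⟩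
  · obtain ⟨t, rfl⟩ : ∃ t, n₂ = n₁ + 2 * t := ⟨b - a, by omega⟩
    have := part1 hA hB hAodd hBodd hAB hk hm₁ hn₁ h1 h2
    omega
  · rw [ha] at h1
    rw [hb] at h2
    exact (part2 hA hB hAodd hBodd hAB hk (by omega) h1 h2).elim
  · rw [ha] at h1
    rw [hb] at h2
    exact (part2 hA hB hAodd hBodd hAB hk (by omega) h2 h1).elim
  · obtain ⟨t, rfl⟩ : ∃ t, n₂ = n₁ + 2 * t := ⟨b - a, by omega⟩
    have := part1 hA hB hAodd hBodd hAB hk hm₁ hn₁ h1 h2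
    omega

/-- Lemma 2.6: for distinct odd primes `A`, `B` and a fixed `k ≥ 1`, the equation
`A^m - B^n = 2^k` has at most one solution in positive integers `(m, n)`. -/
theorem stmt_11 (A B : ℕ) (hA : Nat.Prime A) (hB : Nat.Prime B)
    (hAodd : 2 < A) (hBodd : 2 < B) (hAB : A ≠ B) (k : ℕ) (hk : 0 < k)
    (m₁ n₁ m₂ n₂ : ℕ) (hm₁ : 0 < m₁) (hn₁ : 0 < n₁) (hm₂ : 0 < m₂) (hn₂ : 0 < n₂)
    (h1 : (A : ℤ) ^ m₁ - (B : ℤ) ^ n₁ = 2 ^ k)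
    (h2 : (A : ℤ) ^ m₂ - (B : ℤ) ^ n₂ = 2 ^ k) :
    (m₁, n₁) = (m₂, n₂) := by
  have g1 : (A : ℤ) ^ m₁ = (B : ℤ) ^ n₁ + 2 ^ k := by linarith
  have g2 : (A : ℤ) ^ m₂ = (B : ℤ) ^ n₂ + 2 ^ k := by linarith
  have hn : n₁ = n₂ := by
    rcases le_total n₁ n₂ with h | h
    · exact stmt_11_n hA hB hAodd hBodd hAB hk hm₁ hn₁ h g1 g2
    · exact (stmt_11_n hA hB hAodd hBodd hAB hk hm₂ hn₂ h g2 g1).symm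
  subst hn
  have hm : (A : ℤ) ^ m₁ = (A : ℤ) ^ m₂ := by rw [g1, g2]
  have hm' : m₁ = m₂ :=
    Nat.pow_right_injective (by omega : 2 ≤ A) (by exact_mod_cast hm)
  rw [hm']
end

section
/- Let $a$, $b$, $c$ be distinct primes with $a < b$, $(a,b,c)$ not one of $(2,3,5)$, $(2,3,11)$, $(2,5,3)$, $(2,7,3)$, $(3,5,2)$, $(3,13,2)$, and suppose the equation $a^x + b^y = c^z$ has more than one solution in positive integers. If moreover $b \equiv 13 \pmod{24}$ and $c \equiv 17 \pmod{24}$, then there exist odd integers $y_2 > 1$ and $z_2 > 1$ such that $4 + b^{y_2} = c^{z_2}$. -/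
lemma g_odd_pow (u v : ℤ) (hu : Even u) (hv : Odd v) (k : ℕ) :
    ∃ A B : ℤ, Odd A ∧ Odd B ∧ (⟨u, v⟩ : GaussianInt) ^ (2 * k + 1) = ⟨u * A, v * B⟩ := by
  induction k with
  | zero => exact ⟨1, 1, odd_one, odd_one, by simp⟩
  | succ k ih =>
    obtain ⟨A, B, hA, hB, h⟩ := ih
    have h2 : Odd (u ^ 2 - v ^ 2) := by
      apply Even.sub_odd
      · exact hu.pow_of_ne_zero (by norm_num)
      · exact hv.pow
    refine ⟨A * (u ^ 2 - v ^ 2) - 2 * (v ^ 2 * B), 2 * (u ^ 2 * A) + B * (u ^ 2 - v ^ 2), ?_, ?_, ?_⟩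
    · exact (hA.mul h2).sub_even (even_two_mul _)
    · exact (even_two_mul _).add_odd (hB.mul h2)
    · rw [show 2 * (k + 1) + 1 = (2 * k + 1) + 2 by ring, pow_add, h, pow_two]
      ext <;> simp <;> ring

lemma g_even_pow (u v : ℤ) (hu : 4 ∣ u) (hv : Odd v) (k s : ℕ) :
    ∃ r w : ℤ, Odd w ∧ (⟨u, v⟩ : GaussianInt) ^ (2 ^ (s + 2) * (2 * k + 1))
      = ⟨1 + 2 ^ (s + 3) * r, 2 ^ (s + 2) * (u * w)⟩ := by
  have hu2 : Even u := by obtain ⟨e, rfl⟩ := hu; exact ⟨2 * e, by ring⟩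
  induction s with
  | zero =>
    obtain ⟨A, B, hA, hB, h⟩ := g_odd_pow u v hu2 hv k
    obtain ⟨e, rfl⟩ := hu
    have hP : Odd ((4 * e * A) ^ 2 - (v * B) ^ 2) := by
      apply Even.sub_odd
      · exact ⟨8 * (e * A) ^ 2, by ring⟩
      · exact (hv.mul hB).pow
    have h1 : (8 : ℤ) ∣ ((4 * e * A) ^ 2 - (v * B) ^ 2) ^ 2 - 1 := Int.eight_dvd_sq_sub_one_of_odd hP
    obtain ⟨r, hr⟩ := h1
    refine ⟨r - 8 * (e * A * v * B) ^ 2, ((4 * e * A) ^ 2 - (v * B) ^ 2) * (A * (v * B)), hP.mul (hA.mul (hv.mul hB)), ?_⟩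
    rw [show 2 ^ (0 + 2) * (2 * k + 1) = (2 * k + 1) * 2 * 2 by ring, pow_mul, pow_mul, h, pow_two, pow_two]
    ext
    · simp; linear_combination hr
    · simp; ring
  | succ s ih =>
    obtain ⟨r, w, hw, h⟩ := ih
    obtain ⟨e, rfl⟩ := hu
    refine ⟨r + 2 ^ (s + 2) * r ^ 2 - 2 ^ s * 16 * (e * w) ^ 2, (1 + 2 ^ (s + 3) * r) * w, ?_, ?_⟩
    · refine Odd.mul ?_ hw
      exact ⟨2 ^ (s + 2) * r, by ring⟩
    · rw [show 2 ^ (s + 1 + 2) * (2 * k + 1) = 2 ^ (s + 2) * (2 * k + 1) * 2 by ring, pow_mul, h, pow_two]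
      ext
      · simp; ring
      · simp; ring

lemma g_z_one (u v : ℤ) (hu : 4 ∣ u) (hu0 : u ≠ 0) (hv : Odd v) (z : ℕ) (hz : z % 4 = 1)
    (h : ((⟨u, v⟩ : GaussianInt) ^ z).re = u ∨ ((⟨u, v⟩ : GaussianInt) ^ z).re = -u) : z = 1 := by
  by_contra hne
  obtain ⟨s, m, hm, hsm⟩ := Nat.exists_eq_two_pow_mul_odd (n := z - 1) (by omega)
  have hs : 2 ≤ s := by
    by_contra hs
    obtain ⟨k, rfl⟩ := hm
    interval_cases s <;> omega
  obtain ⟨s, rfl⟩ := Nat.exists_eq_add_of_le' hs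
  obtain ⟨k, rfl⟩ := hm
  obtain ⟨r, w, hw, hp⟩ := g_even_pow u v hu hv k s
  have hz1 : z = 2 ^ (s + 2) * (2 * k + 1) + 1 := by omega
  rw [hz1, pow_succ, hp] at h
  simp only [Zsqrtd.re_mul] at h
  have hodd : Odd (w * v) := hw.mul hv
  obtain ⟨f, hf⟩ := hodd
  rcases h with h | h
  · have : u * 2 ^ (s + 2) * (2 * r - w * v) = 0 := by linear_combination h
    rcases mul_eq_zero.1 this with h' | h'
    · rcases mul_eq_zero.1 h' with h' | h'
      · exact hu0 h'
      · exact absurd h' (by positivity)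
    · omega
  · have : u * (2 + 4 * (2 ^ s * (2 * r - w * v))) = 0 := by linear_combination h
    rcases mul_eq_zero.1 this with h' | h'
    · exact hu0 h'
    · omega

lemma g_shape (X Y : ℤ) (c z : ℕ) (hX : Even X) (hY : Odd Y) (hXY : IsCoprime X Y)
    (hz : Odd z) (hc : Odd c) (h : X ^ 2 + Y ^ 2 = (c : ℤ) ^ z) :
    ∃ u v : ℤ, Even u ∧ Odd v ∧ u ^ 2 + v ^ 2 = c ∧
      (((⟨u, v⟩ : GaussianInt) ^ z).re = X ∨ ((⟨u, v⟩ : GaussianInt) ^ z).re = -X) ∧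
      (((⟨u, v⟩ : GaussianInt) ^ z).im = Y ∨ ((⟨u, v⟩ : GaussianInt) ^ z).im = -Y) := by
  have hz0 : z ≠ 0 := by rintro rfl; simp at hz
  have hcop : IsCoprime (⟨X, Y⟩ : GaussianInt) ⟨X, -Y⟩ := by
    obtain ⟨p, q, hpq⟩ := hXY
    have hN : Odd (X ^ 2 + Y ^ 2) := (hX.pow_of_ne_zero (by norm_num)).add_odd hY.pow
    obtain ⟨n, hn⟩ := hN
    refine ⟨⟨X, -Y⟩ - n * (p + ⟨0, -q⟩), - n * (p - ⟨0, -q⟩), ?_⟩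
    ext
    · simp
      linear_combination hn - 2 * n * hpq
    · simp
      ring
  have hprod : (⟨X, Y⟩ : GaussianInt) * ⟨X, -Y⟩ = (c : GaussianInt) ^ z := by
    have : ((c : GaussianInt)) ^ z = (((c : ℤ) ^ z : ℤ) : GaussianInt) := by push_cast; rfl
    rw [this, ← h]
    ext
    · rw [Zsqrtd.re_intCast]; simp; ring
    · rw [Zsqrtd.im_intCast]; simp; ring
  obtain ⟨d, hd⟩ := exists_associated_pow_of_mul_eq_pow' hcop hprod
  have hnorm : (Zsqrtd.norm d) ^ z = (c : ℤ) ^ z := by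
    have h1 : Zsqrtd.norm (d ^ z) = Zsqrtd.norm (⟨X, Y⟩ : GaussianInt) :=
      Zsqrtd.norm_eq_of_associated (by norm_num) hd
    have h2 : Zsqrtd.norm (d ^ z) = (Zsqrtd.norm d) ^ z := map_pow Zsqrtd.normMonoidHom d z
    rw [← h2, h1, ← h, Zsqrtd.norm_def]; ring
  have hnd : Zsqrtd.norm d = c :=
    (pow_left_inj₀ (Zsqrtd.norm_nonneg (by norm_num) d) (by positivity) hz0).1 hnorm
  have hnd' : d.re ^ 2 + d.im ^ 2 = c := by rw [← hnd, Zsqrtd.norm_def]; ring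
  have hcodd : Odd (d.re ^ 2 + d.im ^ 2) := by rw [hnd']; exact_mod_cast hc
  have key : ∃ u v : ℤ, Even u ∧ Odd v ∧ u ^ 2 + v ^ 2 = c ∧
      Associated ((⟨u, v⟩ : GaussianInt) ^ z) ⟨X, Y⟩ := by
    rcases Int.even_or_odd d.re with he | ho
    · refine ⟨d.re, d.im, he, ?_, hnd', hd⟩
      by_contra h'
      rw [Int.not_odd_iff_even] at h'
      exact (Int.not_even_iff_odd.2 hcodd)
        ((he.pow_of_ne_zero (by norm_num)).add (h'.pow_of_ne_zero (by norm_num)))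
    · refine ⟨-d.im, d.re, ?_, ho, by rw [← hnd']; ring, ?_⟩
      · rw [even_neg]
        by_contra h'
        rw [Int.not_even_iff_odd] at h'
        exact (Int.not_even_iff_odd.2 hcodd) (ho.pow.add_odd h'.pow)
      · refine Associated.trans ?_ hd
        apply Associated.pow_pow
        have hI : IsUnit (⟨0, -1⟩ : GaussianInt) := by
          refine IsUnit.of_mul_eq_one (⟨0, 1⟩ : GaussianInt) ?_
          ext <;> simp
        obtain ⟨e, he⟩ := hI
        refine ⟨e, ?_⟩
        rw [he]
        ext <;> simp
  obtain ⟨u, v, hu, hv, huv, e, he⟩ := key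
  refine ⟨u, v, hu, hv, huv, ?_⟩
  obtain ⟨k, rfl⟩ := hz
  obtain ⟨A, B, hA, hB, hAB⟩ := g_odd_pow u v hu hv k
  rw [hAB] at he ⊢
  have hen : Zsqrtd.norm (e : GaussianInt) = 1 :=
    (Zsqrtd.norm_eq_one_iff' (by norm_num) _).2 e.isUnit
  have hen' : (e : GaussianInt).re ^ 2 + (e : GaussianInt).im ^ 2 = 1 := by
    rw [Zsqrtd.norm_def] at hen
    linear_combination hen
  have hre := congrArg Zsqrtd.re he
  have him := congrArg Zsqrtd.im he
  simp only [Zsqrtd.re_mul, Zsqrtd.im_mul] at hre him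
  generalize (e : GaussianInt).re = x at *
  generalize (e : GaussianInt).im = y at *
  have hx1 : x ≤ 1 := by nlinarith
  have hx2 : -1 ≤ x := by nlinarith
  have hx : x = -1 ∨ x = 0 ∨ x = 1 := by omega
  simp only
  have hy0 : x ≠ 0 → y = 0 := by
    intro h0
    have : x ^ 2 = 1 := by rcases hx with h | h | h <;> simp_all
    have : y ^ 2 = 0 := by linarith
    exact pow_eq_zero_iff (by norm_num) |>.1 this
  rcases hx with h1 | h1 | h1
  · have := hy0 (by omega)
    subst h1 this
    constructor
    · right; linarith
    · right; linarith
  · exfalso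
    subst h1
    have : Even Y := by
      rw [← him]; simp only [mul_zero, add_zero]
      exact (hu.mul_right _).mul_right _
    exact (Int.not_even_iff_odd.2 hY) this
  · have := hy0 (by omega)
    subst h1 this
    constructor
    · left; linarith
    · left; linarith

lemma two_ne5 : (2 : ZMod 5) ≠ 0 := by decide

lemma two_sq5 : (2 : ZMod 5) ^ 2 = -1 := by decide

lemma sq5 (r : ZMod 5) (hr : r ≠ 0) : r ^ 2 = 1 ∨ r ^ 2 = -1 := by
  revert r; decide

lemma mod_five (p q r c : ZMod 5) (hp : p ≠ 0) (hq : q ≠ 0) (hr : r ≠ 0) (hc : c ≠ 0)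
    (h1 : p ^ 2 + q ^ 2 = c) (h2 : p ^ 2 + r ^ 2 = c ^ 3) : False := by
  revert p q r c; decide

lemma cast5_ne (b : ℕ) (hb : Nat.Prime b) (h : b ≠ 5) : (b : ZMod 5) ≠ 0 := by
  intro h0
  rw [ZMod.natCast_eq_zero_iff] at h0
  exact h ((Nat.prime_dvd_prime_iff_eq (by norm_num) hb).1 h0).symm

lemma B_z_one (b c m n z : ℕ) (hb : Nat.Prime b) (hc : Nat.Prime c) (hb5 : b ≠ 5) (hc5 : c ≠ 5)
    (hbo : Odd b) (hco : Odd c) (hm : 2 ≤ m) (hz : Odd z)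
    (h : 2 ^ (2 * m) + b ^ (2 * n) = c ^ z) : z = 1 := by
  have : Fact (Nat.Prime 5) := ⟨by norm_num⟩
  have hXe : Even ((2 : ℤ) ^ m) := (even_two).pow_of_ne_zero (by omega)
  have hYo : Odd ((b : ℤ) ^ n) := Odd.pow (by exact_mod_cast hbo)
  have hcop : IsCoprime ((2 : ℤ) ^ m) ((b : ℤ) ^ n) := by
    apply IsCoprime.pow
    rw [Int.isCoprime_iff_gcd_eq_one]
    exact (Nat.coprime_two_left).2 hbo
  obtain ⟨u, v, hu, hv, huv, hre, him⟩ := g_shape ((2 : ℤ) ^ m) ((b : ℤ) ^ n) c z hXe hYo hcop hz hco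
    (by rw [← pow_mul, ← pow_mul, mul_comm m, mul_comm n]; exact_mod_cast h)
  obtain ⟨k, hk⟩ := hz
  obtain ⟨A, B, hA, hB, hAB⟩ := g_odd_pow u v hu hv k
  rw [← hk] at hAB
  have hA1 : IsUnit A := by
    have hc2 : IsCoprime A ((2 : ℤ) ^ m) := by
      apply IsCoprime.pow_right
      rw [isCoprime_comm, Int.isCoprime_iff_gcd_eq_one]
      exact (Nat.coprime_two_left).2 (Int.natAbs_odd.2 hA)
    apply hc2.isUnit_of_dvd' dvd_rfl
    rw [hAB] at hre
    rcases hre with h' | h'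
    · exact ⟨u, by rw [← h']; ring⟩
    · exact ⟨-u, by simp only at h'; linarith⟩
  have hu2 : u = 2 ^ m ∨ u = - 2 ^ m := by
    rw [hAB] at hre
    simp only at hre
    rcases Int.isUnit_iff.1 hA1 with rfl | rfl <;> rcases hre with h' | h'
    · left; linarith
    · right; linarith
    · right; linarith
    · left; linarith
  have hu4 : (4 : ℤ) ∣ u := by
    have : (4 : ℤ) ∣ 2 ^ m := by
      obtain ⟨m', rfl⟩ := Nat.exists_eq_add_of_le' hm
      exact ⟨2 ^ m', by ring⟩
    rcases hu2 with rfl | rfl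
    · exact this
    · exact (dvd_neg).2 this
  have hre' : ((⟨u, v⟩ : GaussianInt) ^ z).re = u ∨ ((⟨u, v⟩ : GaussianInt) ^ z).re = -u := by
    rcases hu2 with h' | h' <;> rcases hre with h'' | h'' <;> rw [h'', h'] <;> simp
  have hu0 : u ≠ 0 := by
    rcases hu2 with rfl | rfl <;> simp
  refine g_z_one u v hu4 hu0 hv z ?_ hre'
  by_contra hz4
  have hz3 : z = 4 * (z / 4) + 3 := by omega
  have hvb : v.natAbs ∣ b ^ n := by
    have : v ∣ (b : ℤ) ^ n := by
      rw [hAB] at him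
      rcases him with h' | h'
      · exact ⟨B, by rw [← h']⟩
      · exact ⟨-B, by simp only at h'; linarith⟩
    have := Int.natAbs_dvd_natAbs.2 this
    simpa [Int.natAbs_pow] using this
  obtain ⟨j, -, hj⟩ := (Nat.dvd_prime_pow hb).1 hvb
  have hv2 : v ^ 2 = (b : ℤ) ^ j * (b : ℤ) ^ j := by
    rw [← Int.natAbs_sq, hj]; push_cast; ring
  have hu22 : u ^ 2 = ((2 : ℤ) ^ m) ^ 2 := by
    rcases hu2 with rfl | rfl <;> ring
  have hcN : (2 ^ m) ^ 2 + (b ^ j) ^ 2 = c := by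
    rw [hu22, hv2] at huv
    have : (((2 ^ m) ^ 2 + (b ^ j) ^ 2 : ℕ) : ℤ) = c := by push_cast; rw [← huv]; ring
    exact_mod_cast this
  have hb0 := cast5_ne b hb hb5
  have hc0 := cast5_ne c hc hc5
  have e1 := congrArg (Nat.cast : ℕ → ZMod 5) hcN
  have e2 := congrArg (Nat.cast : ℕ → ZMod 5) h
  push_cast at e1 e2
  rw [hz3, pow_add, pow_mul (c : ZMod 5) 4, ZMod.pow_card_sub_one_eq_one hc0 , one_pow, one_mul,
    mul_comm 2 m, mul_comm 2 n, pow_mul, pow_mul (b : ZMod 5)] at e2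
  refine mod_five (2 ^ m) (b ^ j) (b ^ n) c (pow_ne_zero _ two_ne5) (pow_ne_zero _ hb0)
    (pow_ne_zero _ hb0) hc0 e1 e2

lemma two_B (b c m n m' n' : ℕ) (hc : Nat.Prime c) (hbo : Odd b) (hb1 : 1 < b)
    (hm : 1 ≤ m) (hm' : 1 ≤ m')
    (h : (2 ^ m) ^ 2 + (b ^ n) ^ 2 = c) (h' : (2 ^ m') ^ 2 + (b ^ n') ^ 2 = c) :
    m = m' ∧ n = n' := by
  have hne : (2 : ℤ) ^ m ≠ b ^ n' := by
    intro he
    have h1 : Even ((2 : ℤ) ^ m) := (even_two).pow_of_ne_zero (by omega)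
    have h2 : Odd ((b : ℤ) ^ n') := Odd.pow (by exact_mod_cast hbo)
    rw [he] at h1
    exact (Int.not_even_iff_odd.2 h2) h1
  have hA : (0 : ℤ) < 2 ^ m := by positivity
  have hC : (0 : ℤ) < 2 ^ m' := by positivity
  have hB : (0 : ℤ) < (b : ℤ) ^ n := by positivity
  have hD : (0 : ℤ) < (b : ℤ) ^ n' := by positivity
  have e1 : ((2 : ℤ) ^ m) ^ 2 + ((b : ℤ) ^ n) ^ 2 = c := by exact_mod_cast h
  have e2 : ((2 : ℤ) ^ m') ^ 2 + ((b : ℤ) ^ n') ^ 2 = c := by exact_mod_cast h'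
  have key : ((2 : ℤ) ^ m) * (b : ℤ) ^ n' = (2 : ℤ) ^ m' * (b : ℤ) ^ n := by
    generalize (2 : ℤ) ^ m = A at *
    generalize (2 : ℤ) ^ m' = C at *
    generalize (b : ℤ) ^ n = B at *
    generalize (b : ℤ) ^ n' = D at *
    have hd : (c : ℤ) ∣ (A * D - C * B) * (A * D + C * B) :=
      ⟨D ^ 2 - B ^ 2, by linear_combination D ^ 2 * e1 - B ^ 2 * e2⟩
    have hlt : A * D + C * B < c := by
      have : 0 < (A - D) ^ 2 := by
        have : A - D ≠ 0 := sub_ne_zero.2 hne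
        positivity
      nlinarith [sq_nonneg (C - B)]
    rcases (Nat.prime_iff_prime_int.1 hc).dvd_or_dvd hd with h1 | h1
    · have : A * D - C * B = 0 := by
        apply Int.eq_zero_of_abs_lt_dvd h1
        have := mul_pos hA hD
        have := mul_pos hC hB
        rw [abs_lt]; constructor <;> linarith
      linarith
    · have := Int.le_of_dvd (by positivity) h1
      linarith
  have keyN : 2 ^ m * b ^ n' = 2 ^ m' * b ^ n := by exact_mod_cast key
  have hcp : ∀ i j, Nat.Coprime (2 ^ i) (b ^ j) := fun i j =>
    Nat.Coprime.pow _ _ ((Nat.coprime_two_left).2 hbo)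
  have hmm : 2 ^ m = 2 ^ m' := by
    apply Nat.dvd_antisymm
    · exact (hcp m n).dvd_of_dvd_mul_right (keyN ▸ dvd_mul_right _ _)
    · exact (hcp m' n').dvd_of_dvd_mul_right (keyN ▸ dvd_mul_right _ _)
  refine ⟨Nat.pow_right_injective le_rfl hmm, ?_⟩
  rw [hmm] at keyN
  exact (Nat.pow_right_injective hb1 (Nat.eq_of_mul_eq_mul_left (by positivity) keyN)).symm

lemma classify (b c x y z : ℕ) (hb24 : b % 24 = 13) (hc24 : c % 24 = 17) (hx : 0 < x)
    (h : 2 ^ x + b ^ y = c ^ z) :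
    Odd z ∧ ((x = 2 ∧ Odd y) ∨ ∃ m n, 2 ≤ m ∧ x = 2 * m ∧ y = 2 * n) := by
  have hb3 : (b : ZMod 3) = 1 := by
    have : ((b : ℕ) : ZMod 3) = ((1 : ℕ) : ZMod 3) := by
      rw [ZMod.natCast_eq_natCast_iff']; omega
    simpa using this
  have hc3 : (c : ZMod 3) = 2 := by
    have : ((c : ℕ) : ZMod 3) = ((2 : ℕ) : ZMod 3) := by
      rw [ZMod.natCast_eq_natCast_iff']; omega
    simpa using this
  have hb8 : (b : ZMod 8) = 5 := by
    have : ((b : ℕ) : ZMod 8) = ((5 : ℕ) : ZMod 8) := by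
      rw [ZMod.natCast_eq_natCast_iff']; omega
    simpa using this
  have hc8 : (c : ZMod 8) = 1 := by
    have : ((c : ℕ) : ZMod 8) = ((1 : ℕ) : ZMod 8) := by
      rw [ZMod.natCast_eq_natCast_iff']; omega
    simpa using this
  have e3 := congrArg (Nat.cast : ℕ → ZMod 3) h
  have e8 := congrArg (Nat.cast : ℕ → ZMod 8) h
  push_cast at e3 e8
  rw [hb3, hc3, one_pow] at e3
  rw [hb8, hc8, one_pow] at e8
  have t3 : (2 : ZMod 3) ^ 2 = 1 := by decide
  have t8 : (5 : ZMod 8) ^ 2 = 1 := by decide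
  have hxe : Even x := by
    by_contra hxo
    rw [Nat.not_even_iff_odd] at hxo
    obtain ⟨i, rfl⟩ := hxo
    rw [pow_succ, pow_mul, t3, one_pow] at e3
    exact pow_ne_zero z (by decide : (2 : ZMod 3) ≠ 0) (by rw [← e3]; decide)
  have hzo : Odd z := by
    by_contra hzo
    rw [Nat.not_odd_iff_even] at hzo
    obtain ⟨i, rfl⟩ := hzo
    obtain ⟨j, rfl⟩ := hxe
    rw [← two_mul, ← two_mul, pow_mul, pow_mul, t3, one_pow, one_pow] at e3
    exact absurd e3 (by decide)
  refine ⟨hzo, ?_⟩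
  obtain ⟨m, rfl⟩ := hxe
  by_cases hm : m = 1
  · subst hm
    left
    refine ⟨rfl, ?_⟩
    by_contra hy
    rw [Nat.not_odd_iff_even] at hy
    obtain ⟨i, rfl⟩ := hy
    rw [← two_mul i, pow_mul 5, t8, one_pow] at e8
    exact absurd e8 (by decide)
  · right
    have hm2 : 2 ≤ m := by omega
    have hye : Even y := by
      by_contra hy
      rw [Nat.not_even_iff_odd] at hy
      obtain ⟨i, rfl⟩ := hy
      obtain ⟨m', rfl⟩ := Nat.exists_eq_add_of_le' hm2
      rw [show m' + 2 + (m' + 2) = 3 + (2 * m' + 1) by ring, pow_add 2, pow_succ 5, pow_mul, t8,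
        one_pow, show (2 : ZMod 8) ^ 3 = 0 by decide, zero_mul] at e8
      exact absurd e8 (by decide)
    obtain ⟨n, rfl⟩ := hye
    exact ⟨m, n, hm2, by ring, by ring⟩

lemma mixed_aux (p r c : ZMod 5) (hr : r ≠ 0) (hc : c ≠ 0) (i j : ℕ)
    (hp : p = -1) (h1 : p + (r ^ i) ^ 2 = c) (h2 : 4 + r ^ (2 * j + 1) = c) : False := by
  have hsq : (r ^ i) ^ 2 = (r ^ 2) ^ i := by rw [← pow_mul, ← pow_mul, mul_comm]
  have hr2 : r ^ 2 = 1 ∨ r ^ 2 = -1 := sq5 r hr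
  rw [pow_succ, pow_mul] at h2
  rw [hsq] at h1
  rcases hr2 with h | h
  · rw [h, hp, one_pow] at h1
    exact hc (by rw [← h1]; decide)
  · rw [h] at h1 h2
    rcases neg_one_pow_eq_or (ZMod 5) i with hi | hi <;>
    rcases neg_one_pow_eq_or (ZMod 5) j with hj | hj <;>
    · rw [hi] at h1
      rw [hj] at h2
      clear hi hj hsq
      subst hp
      revert r c
      decide

lemma mixed (b c m n y z : ℕ) (hb : Nat.Prime b) (hc : Nat.Prime c)
    (hb24 : b % 24 = 13) (hc24 : c % 24 = 17) (hm : 2 ≤ m) (hn : 0 < n) (hy : Odd y) (hz : Odd z)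
    (h : 2 ^ (2 * m) + b ^ (2 * n) = c) (h' : 4 + b ^ y = c ^ z) : 1 < y ∧ 1 < z := by
  have hb1 : 1 < b := hb.one_lt
  have hy0 : 0 < y := hy.pos
  have hz0 : 0 < z := hz.pos
  constructor
  · by_contra hy1
    have : y = 1 := by omega
    subst this
    have h1 : c ≤ c ^ z := Nat.le_self_pow (by omega) c
    have h2 : b ^ 2 ≤ b ^ (2 * n) := Nat.pow_le_pow_right (by omega) (by omega)
    have h3 : 2 ^ 4 ≤ 2 ^ (2 * m) := Nat.pow_le_pow_right (by omega) (by omega)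
    nlinarith
  · by_contra hz1
    have : z = 1 := by omega
    subst this
    have : Fact (Nat.Prime 5) := ⟨by norm_num⟩
    have : Fact (Nat.Prime b) := ⟨hb⟩
    rw [pow_one] at h'
    have hb0 := cast5_ne b hb (by rintro rfl; omega)
    have hc0 := cast5_ne c hc (by rintro rfl; omega)
    have hme : Even m := by
      by_contra hmo
      rw [Nat.not_even_iff_odd] at hmo
      have e1 := congrArg (Nat.cast : ℕ → ZMod 5) h
      have e2 := congrArg (Nat.cast : ℕ → ZMod 5) h'
      push_cast at e1 e2
      obtain ⟨j, rfl⟩ := hy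
      refine mixed_aux (2 ^ (2 * m)) b c hb0 hc0 n j ?_ ?_ e2
      · rw [pow_mul, two_sq5, hmo.neg_one_pow]
      · rw [← e1, ← pow_mul (b : ZMod 5), mul_comm n]
    obtain ⟨i, hi⟩ := hme
    have e := congrArg (Nat.cast : ℕ → ZMod b) (h.trans h'.symm)
    push_cast at e
    rw [ZMod.natCast_self, zero_pow (by omega), zero_pow (by omega)] at e
    have h20 : (2 : ZMod b) ≠ 0 := by
      intro h0
      have : ((2 : ℕ) : ZMod b) = 0 := by exact_mod_cast h0
      rw [ZMod.natCast_eq_zero_iff] at this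
      have := Nat.le_of_dvd (by norm_num) this
      omega
    have hfac : (2 ^ m - 2 : ZMod b) * (2 ^ m + 2) = 0 := by
      linear_combination e
    have hm' : m = 2 * (i - 1) + 1 + 1 := by omega
    rcases mul_eq_zero.1 hfac with h1 | h1
    · have hsq : IsSquare (2 : ZMod b) := by
        refine ⟨2 ^ i, ?_⟩
        rw [← pow_add, ← hi]; linear_combination -h1
      rw [ZMod.exists_sq_eq_two_iff (by omega)] at hsq
      omega
    · have hsq : IsSquare (-2 : ZMod b) := by
        refine ⟨2 ^ i, ?_⟩
        rw [← pow_add, ← hi]; linear_combination -h1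
      rw [ZMod.exists_sq_eq_neg_two_iff (by omega)] at hsq
      omega

lemma two_A (b c y z y' z' : ℕ) (hb : 1 < b) (hc : 1 < c) (hy : Odd y) (hz : Odd z)
    (hlt : y < y') (hy' : Odd y') (hz' : Odd z')
    (h : 4 + b ^ y = c ^ z) (h' : 4 + b ^ y' = c ^ z') : 1 < y' ∧ 1 < z' := by
  have h1 : b ^ y < b ^ y' := Nat.pow_lt_pow_right hb hlt
  have h2 : c ^ z < c ^ z' := by omega
  have h3 : z < z' := (Nat.pow_lt_pow_iff_right hc).1 h2
  have := hy.pos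
  have := hz.pos
  omega


/-- Section 5: if `(a,b,c)` is a non-exceptional triple of distinct primes with more
than one solution and `b ≡ 13 mod 24`, `c ≡ 17 mod 24`, then `4 + b^y₂ = c^z₂` for
some odd `y₂ > 1` and odd `z₂ > 1`. -/
theorem stmt_19 (a b c : ℕ) (ha : Nat.Prime a) (hb : Nat.Prime b) (hc : Nat.Prime c)
    (hab : a < b) (hac : a ≠ c) (hbc : b ≠ c)
    (hexc : (a, b, c) ≠ (2, 3, 5) ∧ (a, b, c) ≠ (2, 3, 11) ∧ (a, b, c) ≠ (2, 5, 3) ∧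
        (a, b, c) ≠ (2, 7, 3) ∧ (a, b, c) ≠ (3, 5, 2) ∧ (a, b, c) ≠ (3, 13, 2))
    (hmany : ∃ s t : ℕ × ℕ × ℕ, s ≠ t ∧
        (0 < s.1 ∧ 0 < s.2.1 ∧ 0 < s.2.2 ∧ a ^ s.1 + b ^ s.2.1 = c ^ s.2.2) ∧
        (0 < t.1 ∧ 0 < t.2.1 ∧ 0 < t.2.2 ∧ a ^ t.1 + b ^ t.2.1 = c ^ t.2.2))
    (hb24 : b % 24 = 13) (hc24 : c % 24 = 17) :
    ∃ y₂ z₂ : ℕ, Odd y₂ ∧ Odd z₂ ∧ 1 < y₂ ∧ 1 < z₂ ∧ 4 + b ^ y₂ = c ^ z₂ := by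
  have hb1 := hb.one_lt
  have hc1 := hc.one_lt
  have hbo : Odd b := Nat.odd_iff.2 (by omega)
  have hco : Odd c := Nat.odd_iff.2 (by omega)
  have hb5 : b ≠ 5 := by rintro rfl; omega
  have hc5 : c ≠ 5 := by rintro rfl; omega
  obtain ⟨⟨x, y, z⟩, ⟨x', y', z'⟩, hne, ⟨hx, hy, hz, h⟩, ⟨hx', hy', hz', h'⟩⟩ := hmany
  simp only at hx hy hz h hx' hy' hz' h'
  have ha2 : a = 2 := by
    rcases ha.eq_two_or_odd' with h2 | h2
    · exact h2
    · exfalso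
      have e1 : Even (a ^ x + b ^ y) := h2.pow.add_odd hbo.pow
      rw [h] at e1
      exact (Nat.not_even_iff_odd.2 hco.pow) e1
  subst ha2
  obtain ⟨hzo, hA⟩ := classify b c x y z hb24 hc24 hx h
  obtain ⟨hzo', hA'⟩ := classify b c x' y' z' hb24 hc24 hx' h'
  rcases hA with ⟨rfl, hyo⟩ | ⟨m, n, hm, rfl, rfl⟩ <;>
    rcases hA' with ⟨rfl, hyo'⟩ | ⟨m', n', hm', rfl, rfl⟩
  · norm_num only at h h'
    rcases lt_trichotomy y y' with hlt | heq | hlt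
    · obtain ⟨h1, h2⟩ := two_A b c y z y' z' hb1 hc1 hyo hzo hlt hyo' hzo' h h'
      exact ⟨y', z', hyo', hzo', h1, h2, h'⟩
    · subst heq
      have : z = z' := Nat.pow_right_injective hc1 (h.symm.trans h')
      subst this
      exact absurd rfl hne
    · obtain ⟨h1, h2⟩ := two_A b c y' z' y z hb1 hc1 hyo' hzo' hlt hyo hzo h' h
      exact ⟨y, z, hyo, hzo, h1, h2, h⟩
  · have hz1 := B_z_one b c m' n' z' hb hc hb5 hc5 hbo hco hm' hzo' h'
    subst hz1
    rw [pow_one] at h'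
    norm_num only at h
    obtain ⟨h1, h2⟩ := mixed b c m' n' y z hb hc hb24 hc24 hm' (by omega) hyo hzo h' h
    exact ⟨y, z, hyo, hzo, h1, h2, h⟩
  · have hz1 := B_z_one b c m n z hb hc hb5 hc5 hbo hco hm hzo h
    subst hz1
    rw [pow_one] at h
    norm_num only at h'
    obtain ⟨h1, h2⟩ := mixed b c m n y' z' hb hc hb24 hc24 hm (by omega) hyo' hzo' h h'
    exact ⟨y', z', hyo', hzo', h1, h2, h'⟩
  · exfalso
    have hz1 := B_z_one b c m n z hb hc hb5 hc5 hbo hco hm hzo h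
    have hz1' := B_z_one b c m' n' z' hb hc hb5 hc5 hbo hco hm' hzo' h'
    subst hz1 hz1'
    rw [pow_one, mul_comm 2 m, mul_comm 2 n, pow_mul, pow_mul] at h
    rw [pow_one, mul_comm 2 m', mul_comm 2 n', pow_mul, pow_mul] at h'
    obtain ⟨rfl, rfl⟩ := two_B b c m n m' n' hc hbo hb1 (by omega) (by omega) h h'
    exact hne rfl
end
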